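/- arXiv:1906.05639 — 8 statements merged into one kernel-verified Lean document; each statement's English description precedes it below -/
import Mathlib

section
/- Let r ≥ 2 and let the graph G = (V, E) be the clique-fusion G₁ ⊕ … ⊕ G_r of graphs G₁ = (V₁, E₁), …, G_r = (V_r, E_r), where for each i the graph G_i is the edge intersection hypergraph of a 3-uniform hypergraph H_i = (V_i, ℰ_i), i.e. E_i = ℰ(EI(H_i)). Then the hypergraph H = (V₁ ∪ … ∪ V_r, ℰ₁ ∪ … ∪ ℰ_r) is 3-uniform and G = EI(H), i.e. E = ℰ(EI(H)). -/
/-!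
Two distinct hyperedges of size 3 meeting in at least two vertices meet in exactly two, so the
intersection is a pair `{u, v}`. If both hyperedges come from the same `ℰ i`, the pair is an edge
of `G i`. If they come from `ℰ i` and `ℰ j` with `i ≠ j`, then `u` and `v` both lie in
`V i ∩ V j`, and the clique-fusion condition makes them adjacent in the union. Hence passing to the
union of the `ℰ i` creates no new edges; no edge is lost because `EIedges` is monotone.
-/

/-- The edge set of the edge intersection hypergraph `EI(H)` of a hypergraph with
hyperedge set `ℰ`: all intersections of two distinct hyperedges having at least 2 elements. -/
def EIedges {α : Type*} [DecidableEq α] (ℰ : Set (Finset α)) : Set (Finset α) :=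
  {s | ∃ e₁ ∈ ℰ, ∃ e₂ ∈ ℰ, e₁ ≠ e₂ ∧ 2 ≤ (e₁ ∩ e₂).card ∧ s = e₁ ∩ e₂}

theorem EIedges_mono {α : Type*} [DecidableEq α] {𝒜 ℬ : Set (Finset α)} (h : 𝒜 ⊆ ℬ) :
    EIedges 𝒜 ⊆ EIedges ℬ := by
  rintro s ⟨e₁, h₁, e₂, h₂, hs⟩
  exact ⟨e₁, h h₁, e₂, h h₂, hs⟩

theorem card_inter_eq_two {α : Type*} [DecidableEq α] {e₁ e₂ : Finset α}
    (h₁ : e₁.card = 3) (h₂ : e₂.card = 3) (hne : e₁ ≠ e₂) (h : 2 ≤ (e₁ ∩ e₂).card) :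
    (e₁ ∩ e₂).card = 2 := by
  refine le_antisymm ?_ h
  by_contra! hlt
  -- An intersection with three elements would be all of `e₁` and all of `e₂`.
  have e1 : e₁ ∩ e₂ = e₁ := Finset.eq_of_subset_of_card_le Finset.inter_subset_left (by omega)
  have e2 : e₁ ∩ e₂ = e₂ := Finset.eq_of_subset_of_card_le Finset.inter_subset_right (by omega)
  exact hne (e1.symm.trans e2)

/-- Let `r ≥ 2` and let `G = (V, E)` be the clique-fusion `G₁ ⊕ … ⊕ G_r` of
graphs `Gᵢ = (Vᵢ, Eᵢ)`, where each `Gᵢ` is the edge intersection hypergraph of a 3-uniform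
hypergraph `Hᵢ = (Vᵢ, ℰᵢ)`, i.e. `Eᵢ = ℰ(EI(Hᵢ))`.  Then `H = (⋃ᵢ Vᵢ, ⋃ᵢ ℰᵢ)` is 3-uniform
and `G = EI(H)`, i.e. `⋃ᵢ Eᵢ = ℰ(EI(H))`. -/
theorem clique_fusion_EI {α : Type*} [DecidableEq α] {r : ℕ} (hr : 2 ≤ r)
    (V : Fin r → Finset α) (E ℰ : Fin r → Set (Finset α))
    -- each `Hᵢ` is a 3-uniform hypergraph on the vertex set `Vᵢ`:
    (huniform : ∀ i, ∀ e ∈ ℰ i, e.card = 3 ∧ e ⊆ V i)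
    -- each `Gᵢ` is the edge intersection hypergraph of `Hᵢ`:
    (hEI : ∀ i, E i = EIedges (ℰ i))
    -- clique-fusion condition: any two distinct vertices lying each in at least two of the
    -- `Vᵢ` are adjacent in the union `G₁ ∪ … ∪ G_r`:
    (hfusion : ∀ u v : α,
      (∃ i j, i ≠ j ∧ u ∈ V i ∧ u ∈ V j) →
      (∃ i j, i ≠ j ∧ v ∈ V i ∧ v ∈ V j) →
      u ≠ v → ({u, v} : Finset α) ∈ ⋃ i, E i) :
    (∀ e ∈ ⋃ i, ℰ i, e.card = 3) ∧ EIedges (⋃ i, ℰ i) = ⋃ i, E i := by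
  constructor
  · intro e he
    obtain ⟨i, hi⟩ := Set.mem_iUnion.1 he
    exact (huniform i e hi).1
  apply Set.Subset.antisymm
  · rintro s ⟨e₁, h₁, e₂, h₂, hne, hcard, rfl⟩
    obtain ⟨i, hi⟩ := Set.mem_iUnion.1 h₁
    obtain ⟨j, hj⟩ := Set.mem_iUnion.1 h₂
    obtain ⟨c₁, s₁⟩ := huniform i e₁ hi
    obtain ⟨c₂, s₂⟩ := huniform j e₂ hj
    by_cases hij : i = j
    · subst hij
      refine Set.mem_iUnion.2 ⟨i, ?_⟩
      rw [hEI]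
      exact ⟨e₁, hi, e₂, hj, hne, hcard, rfl⟩
    · obtain ⟨u, v, huv, hs⟩ := Finset.card_eq_two.1 (card_inter_eq_two c₁ c₂ hne hcard)
      have hshared : ∀ w ∈ e₁ ∩ e₂, ∃ i j, i ≠ j ∧ w ∈ V i ∧ w ∈ V j := fun w hw =>
        ⟨i, j, hij, s₁ (Finset.mem_inter.1 hw).1, s₂ (Finset.mem_inter.1 hw).2⟩
      rw [hs] at hshared ⊢
      exact hfusion u v (hshared u (by simp)) (hshared v (by simp)) huv
  · refine Set.iUnion_subset fun i => ?_
    rw [hEI]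
    exact EIedges_mono (Set.subset_iUnion ℰ i)
end

section
/- Every cactus G with circumference ci(G) ≥ 5 is an edge intersection hypergraph of a 3-uniform hypergraph. -/
/-- The edge set of a simple graph, with edges regarded as 2-element finsets. -/
def edgeFinsets {α : Type*} [DecidableEq α] (G : SimpleGraph α) : Set (Finset α) :=
  {s | ∃ u v, G.Adj u v ∧ s = {u, v}}

/-- A graph is the edge intersection hypergraph of a 3-uniform hypergraph on the same
vertex set. -/
def IsEIofThreeUniform {α : Type*} [DecidableEq α] (G : SimpleGraph α) : Prop :=
  ∃ ℰ : Set (Finset α), (∀ e ∈ ℰ, e.card = 3) ∧ EIedges ℰ = edgeFinsets G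

/-- A cactus is a simple connected graph in which every edge is contained in at most one
cycle (two cycles sharing an edge must have the same edge set). -/
def IsCactus {α : Type*} (G : SimpleGraph α) : Prop :=
  G.Connected ∧ ∀ ⦃u v : α⦄ (p : G.Walk u u) (q : G.Walk v v),
    p.IsCycle → q.IsCycle → (∃ e, e ∈ p.edges ∧ e ∈ q.edges) →
      ∀ e, e ∈ p.edges ↔ e ∈ q.edges

open SimpleGraph

namespace CactusEI

/-! ### Cycle-closed subgraphs -/

/-- A subgraph `F` is cycle-closed if every cycle of `G` that uses an edge of `F` lies entirely
in `F`. -/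
def CycleClosed {α : Type*} {G : SimpleGraph α} (F : G.Subgraph) : Prop :=
  ∀ ⦃u : α⦄ (p : G.Walk u u), p.IsCycle → (∃ e, e ∈ p.edges ∧ e ∈ F.edgeSet) →
    ∀ e ∈ p.edges, e ∈ F.edgeSet

theorem CycleClosed.sup {α : Type*} {G : SimpleGraph α} {A B : G.Subgraph}
    (hA : CycleClosed A) (hB : CycleClosed B) : CycleClosed (A ⊔ B) := by
  rintro u p hp ⟨e, hep, he⟩ f hf
  rw [Subgraph.edgeSet_sup] at he ⊢
  rcases he with he | he
  · exact Or.inl (hA p hp ⟨e, hep, he⟩ f hf)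
  · exact Or.inr (hB p hp ⟨e, hep, he⟩ f hf)

/-- Two connected subgraphs with two common vertices `u ≠ x` share an edge as soon as one of them
is cycle-closed: otherwise the first edge of a path from `u` to `x` in `A`, closed up by the rest of
that path and a walk from `x` back to `u` in `B`, gives a cycle which `A` would have to contain. -/
theorem exists_common_edge {α : Type*} [DecidableEq α] {G : SimpleGraph α} {A B : G.Subgraph}
    (hA : A.Connected) (hB : B.Connected) (hAc : CycleClosed A) {u x : α} (hux : u ≠ x)
    (huA : u ∈ A.verts) (hxA : x ∈ A.verts) (huB : u ∈ B.verts) (hxB : x ∈ B.verts) :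
    ∃ e, e ∈ A.edgeSet ∧ e ∈ B.edgeSet := by
  by_contra! hno
  obtain ⟨P₀, hP₀⟩ :=
    ((Subgraph.connected_iff_forall_exists_walk_subgraph A).1 hA).2 huA hxA
  obtain ⟨R, hR⟩ := ((Subgraph.connected_iff_forall_exists_walk_subgraph B).1 hB).2 hxB huB
  have hPA : ∀ e ∈ P₀.bypass.edges, e ∈ A.edgeSet := fun e he =>
    Subgraph.edgeSet_mono hP₀
      (by simpa using P₀.edges_bypass_subset_edges he)
  have hRB : ∀ e ∈ R.edges, e ∈ B.edgeSet := fun e he =>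
    Subgraph.edgeSet_mono hR (by simpa using he)
  have hPp := P₀.bypass_isPath
  generalize P₀.bypass = P at hPA hPp
  cases P with
  | nil => exact hux rfl
  | @cons _ a _ h P =>
    rw [Walk.cons_isPath_iff] at hPp
    set W := (P.append R).bypass with hW
    have hWe : ∀ e ∈ W.edges, e ∈ P.edges ∨ e ∈ R.edges := fun e he => by
      simpa using (P.append R).edges_bypass_subset_edges he
    have huaA : s(u, a) ∈ A.edgeSet := hPA _ (by simp)
    have hcyc : (Walk.cons h W).IsCycle := by
      rw [Walk.cons_isCycle_iff]
      refine ⟨Walk.bypass_isPath _, fun hm => ?_⟩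
      rcases hWe _ hm with hm | hm
      · exact hPp.2 (P.fst_mem_support_of_mem_edges hm)
      · exact hno _ huaA (hRB _ hm)
    have hall := hAc _ hcyc ⟨s(u, a), by simp, huaA⟩
    have hnil : ¬ W.Nil := Walk.not_nil_of_ne h.symm.ne
    -- The last edge of `W` ends in `u`, and it cannot come from `B`.
    have hlast := W.mk_penultimate_end_mem_edges hnil
    rcases hWe _ hlast with hm | hm
    · exact hPp.2 (P.snd_mem_support_of_mem_edges hm)
    · exact hno _ (hall _ (by simp [hlast])) (hRB _ hm)

/-- A cycle of length `k`, read as an injective map on `ZMod k`. -/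
theorem exists_cyclic_param {α : Type*} {G : SimpleGraph α} {u : α} {p : G.Walk u u}
    (hp : p.IsCycle) : ∃ f : ZMod p.length → α, Function.Injective f ∧ f 0 = u ∧
      (∀ i, p.toSubgraph.Adj (f i) (f (i + 1))) ∧
      (∀ x y, p.toSubgraph.Adj x y → ∃ i, s(x, y) = s(f i, f (i + 1))) ∧
      (∀ v ∈ p.toSubgraph.verts, ∃ i, v = f i) ∧ ∀ i, f i ∈ p.toSubgraph.verts := by
  have h3 := hp.three_le_length
  have : NeZero p.length := ⟨by omega⟩
  set f : ZMod p.length → α := fun i => p.getVert i.val with hf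
  have key : ∀ n : ℕ, n ≤ p.length → f (n : ZMod p.length) = p.getVert n := by
    intro n hn
    rcases hn.lt_or_eq with hn | rfl
    · simp [hf, ZMod.val_natCast_of_lt hn]
    · simp [hf]
  have key' : ∀ i : ZMod p.length, f (i + 1) = p.getVert (i.val + 1) := by
    intro i
    rw [← key _ (ZMod.val_lt i)]
    simp
  have hadj : ∀ i, p.toSubgraph.Adj (f i) (f (i + 1)) := by
    intro i
    rw [key' i, Walk.toSubgraph_adj_iff]
    exact ⟨i.val, rfl, ZMod.val_lt i⟩
  refine ⟨f, ?_, by simp [hf], hadj, ?_, ?_, fun i => (hadj i).fst_mem⟩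
  · intro i j hij
    have hi := ZMod.val_lt i
    have hj := ZMod.val_lt j
    exact ZMod.val_injective _ (hp.getVert_injOn' (by simp; omega) (by simp; omega) hij)
  · intro x y hxy
    obtain ⟨i, hi, hil⟩ := (Walk.toSubgraph_adj_iff p).1 hxy
    refine ⟨(i : ZMod p.length), ?_⟩
    have h2 := key (i + 1) hil
    push_cast at h2
    rw [h2, key i hil.le, hi]
  · intro v hv
    rw [Walk.mem_verts_toSubgraph, Walk.mem_support_iff_exists_getVert] at hv
    obtain ⟨n, rfl, hn⟩ := hv
    exact ⟨n, (key n hn).symm⟩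

/-! ### Realizations of subgraphs by triples -/

/-- `v` has two distinct neighbours in `F`. -/
def TwoNbrs {α : Type*} {G : SimpleGraph α} (F : G.Subgraph) (v : α) : Prop :=
  ∃ x y, x ≠ y ∧ F.Adj v x ∧ F.Adj v y

theorem TwoNbrs.mono {α : Type*} {G : SimpleGraph α} {F F' : G.Subgraph} (h : F ≤ F') {v : α} :
    TwoNbrs F v → TwoNbrs F' v := fun ⟨x, y, hxy, hx, hy⟩ => ⟨x, y, hxy, h.2 hx, h.2 hy⟩

/-- No hyperedge of `ℰ` contains both `p` and `q`. -/
def Uncovered {α : Type*} (ℰ : Set (Finset α)) (p q : α) : Prop := ∀ e ∈ ℰ, p ∈ e → q ∉ e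

/-- The set `ℰ` of triples in `F` realizes the subgraph `F`: two distinct triples meet in at most
one vertex or in an edge of `G`, and every edge of `F` lies in two triples. The set `C` is a
reservoir of auxiliary vertices; the condition `room` says that a new vertex can still be attached
to any vertex `u` of `F`, because `u` has two neighbours or because some `y ∈ C` forms an uncovered
pair with `u`. -/
structure Realizes {α : Type*} {G : SimpleGraph α} (C : Finset α) (F : G.Subgraph)
    (ℰ : Set (Finset α)) : Prop where
  card3 : ∀ e ∈ ℰ, e.card = 3
  sub : ∀ e ∈ ℰ, ∀ v ∈ e, v ∈ F.verts
  inter : ∀ e₁ ∈ ℰ, ∀ e₂ ∈ ℰ, e₁ ≠ e₂ → ∀ p q, p ≠ q → p ∈ e₁ → q ∈ e₁ → p ∈ e₂ → q ∈ e₂ → G.Adj p q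
  cover : ∀ x y, F.Adj x y → ∃ e₁ ∈ ℰ, ∃ e₂ ∈ ℰ, e₁ ≠ e₂ ∧ x ∈ e₁ ∧ y ∈ e₁ ∧ x ∈ e₂ ∧ y ∈ e₂
  room : ∀ u ∈ F.verts, TwoNbrs F u ∨ ((∃ x, F.Adj u x) ∧ ∃ y ∈ C, y ≠ u ∧ Uncovered ℰ u y)
  core : ∀ c ∈ C, TwoNbrs F c

theorem Realizes.mem_verts {α : Type*} {G : SimpleGraph α} {C : Finset α} {F : G.Subgraph}
    {ℰ : Set (Finset α)} (h : Realizes C F ℰ) {c : α} (hc : c ∈ C) : c ∈ F.verts := by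
  obtain ⟨x, -, -, hx, -⟩ := h.core c hc
  exact hx.fst_mem

theorem Realizes.exists_adj {α : Type*} {G : SimpleGraph α} {C : Finset α} {F : G.Subgraph}
    {ℰ : Set (Finset α)} (h : Realizes C F ℰ) {u : α} (hu : u ∈ F.verts) : ∃ x, F.Adj u x := by
  rcases h.room u hu with ⟨x, -, -, hx, -⟩ | ⟨hx, -⟩
  exacts [⟨x, hx⟩, hx]

/-- Adding a set `N` of new triples to a realization. A pair of old vertices inside a new triple
must be an edge of `F`, or an uncovered pair both of whose ends have two neighbours in `F'`. -/
theorem Realizes.extend {α : Type*} {G : SimpleGraph α} {C : Finset α} {F F' : G.Subgraph}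
    {ℰ : Set (Finset α)} (h : Realizes C F ℰ) (hle : F ≤ F') (N : Set (Finset α))
    (card3 : ∀ e ∈ N, e.card = 3) (sub : ∀ e ∈ N, ∀ v ∈ e, v ∈ F'.verts)
    (inter : ∀ e₁ ∈ N, ∀ e₂ ∈ N, e₁ ≠ e₂ →
      ∀ p q, p ≠ q → p ∈ e₁ → q ∈ e₁ → p ∈ e₂ → q ∈ e₂ → G.Adj p q)
    (cross : ∀ e ∈ N, ∀ p q, p ≠ q → p ∈ e → q ∈ e → p ∈ F.verts → q ∈ F.verts →
      F.Adj p q ∨ (Uncovered ℰ p q ∧ TwoNbrs F' p ∧ TwoNbrs F' q))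
    (cover : ∀ x y, F'.Adj x y → F.Adj x y ∨
      ∃ e₁ ∈ N, ∃ e₂ ∈ N, e₁ ≠ e₂ ∧ x ∈ e₁ ∧ y ∈ e₁ ∧ x ∈ e₂ ∧ y ∈ e₂)
    (room : ∀ u ∈ F'.verts, u ∉ F.verts → TwoNbrs F' u ∨
      ((∃ x, F'.Adj u x) ∧ ∃ y ∈ C, y ≠ u ∧ Uncovered N u y)) :
    Realizes C F' (ℰ ∪ N) := by
  have hcross : ∀ e₁ ∈ ℰ, ∀ e₂ ∈ N, ∀ p q, p ≠ q → p ∈ e₁ → q ∈ e₁ → p ∈ e₂ → q ∈ e₂ →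
      G.Adj p q := by
    intro e₁ h₁ e₂ h₂ p q hpq hp₁ hq₁ hp₂ hq₂
    rcases cross e₂ h₂ p q hpq hp₂ hq₂ (h.sub _ h₁ _ hp₁) (h.sub _ h₁ _ hq₁) with h | h
    · exact h.adj_sub
    · exact absurd hq₁ (h.1 e₁ h₁ hp₁)
  refine ⟨?_, ?_, ?_, ?_, ?_, fun c hc => (h.core c hc).mono hle⟩
  · rintro e (he | he)
    exacts [h.card3 e he, card3 e he]
  · rintro e (he | he) v hv
    exacts [hle.1 (h.sub e he v hv), sub e he v hv]
  · rintro e₁ (h₁ | h₁) e₂ (h₂ | h₂) hne p q hpq hp₁ hq₁ hp₂ hq₂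
    · exact h.inter e₁ h₁ e₂ h₂ hne p q hpq hp₁ hq₁ hp₂ hq₂
    · exact hcross e₁ h₁ e₂ h₂ p q hpq hp₁ hq₁ hp₂ hq₂
    · exact hcross e₂ h₂ e₁ h₁ p q hpq hp₂ hq₂ hp₁ hq₁
    · exact inter e₁ h₁ e₂ h₂ hne p q hpq hp₁ hq₁ hp₂ hq₂
  · intro x y hxy
    rcases cover x y hxy with hxy | ⟨e₁, h₁, e₂, h₂, h₃⟩
    · obtain ⟨e₁, h₁, e₂, h₂, h₃⟩ := h.cover x y hxy
      exact ⟨e₁, Or.inl h₁, e₂, Or.inl h₂, h₃⟩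
    · exact ⟨e₁, Or.inr h₁, e₂, Or.inr h₂, h₃⟩
  · intro u hu'
    by_cases hu : u ∈ F.verts
    · rcases h.room u hu with h2 | ⟨⟨x, hx⟩, y, hyC, hyu, hy⟩
      · exact Or.inl (h2.mono hle)
      · by_cases h2 : TwoNbrs F' u
        · exact Or.inl h2
        · refine Or.inr ⟨⟨x, hle.2 hx⟩, y, hyC, hyu, ?_⟩
          rintro e (he | he) hue hye
          · exact hy e he hue hye
          · rcases cross e he u y hyu.symm hue hye hu (h.mem_verts hyC) with hadj | hadj
            · obtain ⟨e₁, h₁, -, -, -, hu₁, hy₁, -⟩ := h.cover u y hadj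
              exact hy e₁ h₁ hu₁ hy₁
            · exact h2 hadj.2.1
    · rcases room u hu' hu with h2 | ⟨hx, y, hyC, hyu, hy⟩
      · exact Or.inl h2
      · refine Or.inr ⟨hx, y, hyC, hyu, ?_⟩
        rintro e (he | he) hue
        · exact absurd (h.sub e he u hue) hu
        · exact hy e he hue

/-! ### Attaching a pendant vertex or a cycle -/

/-- Attaching a pendant vertex `w` at `u`: add `{u, w, x}` and `{u, w, y}`, where `x` is a neighbour
of `u` and `y` is a second neighbour or a vertex of `C` whose pair with `u` is still uncovered. -/
theorem Realizes.pendant {α : Type*} [DecidableEq α] {G : SimpleGraph α} {C : Finset α}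
    {F F' : G.Subgraph} {ℰ : Set (Finset α)} (h : Realizes C F ℰ) (hC : 5 ≤ C.card) (hle : F ≤ F')
    {u w : α} (hu : u ∈ F.verts) (hw : w ∉ F.verts) (huw : F'.Adj u w)
    (hadj : ∀ x y, F'.Adj x y → F.Adj x y ∨ s(x, y) = s(u, w))
    (hverts : ∀ v ∈ F'.verts, v ∈ F.verts ∨ v = w) : ∃ ℰ', Realizes C F' ℰ' := by
  obtain ⟨x, y, hxy, hyu, hx, hy, hy'⟩ : ∃ x y, x ≠ y ∧ y ≠ u ∧ F.Adj u x ∧ y ∈ F.verts ∧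
      (F.Adj u y ∨ (Uncovered ℰ u y ∧ TwoNbrs F' y)) := by
    rcases h.room u hu with ⟨x, y, hxy, hx, hy⟩ | ⟨⟨x, hx⟩, y, hyC, hyu, hy⟩
    · exact ⟨x, y, hxy, (F.adj_sub hy).ne', hx, F.edge_vert (F.adj_symm hy), Or.inl hy⟩
    · refine ⟨x, y, ?_, hyu, hx, h.mem_verts hyC, Or.inr ⟨hy, (h.core y hyC).mono hle⟩⟩
      rintro rfl
      obtain ⟨e, he, -, -, -, h₁, h₂, -⟩ := h.cover _ _ hx
      exact hy e he h₁ h₂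
  have hxF := hx.snd_mem
  have hux := hx.ne
  have hwu : w ≠ u := fun h => hw (h ▸ hu)
  have hwx : w ≠ x := fun h => hw (h ▸ hxF)
  have hwy : w ≠ y := fun h => hw (h ▸ hy)
  have hu2 : TwoNbrs F' u := ⟨x, w, hwx.symm, hle.2 hx, huw⟩
  have hunc : Uncovered ℰ u y → Uncovered ℰ y u := fun h e he h₁ h₂ => h e he h₂ h₁
  -- The pair `w`, `z` stays uncovered, which leaves room at the new leaf `w`.
  obtain ⟨z, hzC, hz⟩ : ∃ z ∈ C, z ∉ ({u, x, y} : Finset α) :=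
    Finset.exists_mem_notMem_of_card_lt_card (Finset.card_le_three.trans_lt (by omega))
  have hzw : z ≠ w := fun hzw => hw (hzw ▸ h.mem_verts hzC)
  simp only [Finset.mem_insert, Finset.mem_singleton, not_or] at hz
  refine ⟨_, h.extend hle {{u, w, x}, {u, w, y}} ?_ ?_ ?_ ?_ ?_ ?_⟩
  · rintro e (rfl | rfl)
    · exact Finset.card_eq_three.2 ⟨u, w, x, hwu.symm, hux, hwx, rfl⟩
    · exact Finset.card_eq_three.2 ⟨u, w, y, hwu.symm, hyu.symm, hwy, rfl⟩
  · have h1 := hle.1 hu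
    have h2 := hle.1 hxF
    have h3 := hle.1 hy
    have h4 := huw.snd_mem
    rintro e (rfl | rfl) v hv <;> simp at hv <;> grind
  · have hG := huw.adj_sub
    have hG' := hG.symm
    rintro e (rfl | rfl) e' (rfl | rfl) hne p q hpq <;> simp at hne ⊢ <;> grind
  · have := hx.symm
    have hs : F.Adj u y → F.Adj y u := fun h => h.symm
    rintro e (rfl | rfl) p q hpq hp hq <;> simp at hp hq <;> grind
  · intro a b hab
    rcases hadj a b hab with hab | hab
    · exact Or.inl hab
    · refine Or.inr ⟨{u, w, x}, by simp, {u, w, y}, by simp, ?_, ?_⟩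
      · intro heq
        have : x ∈ ({u, w, y} : Finset α) := heq ▸ (by simp)
        simp at this
        grind
      · rw [Sym2.eq_iff] at hab
        rcases hab with ⟨rfl, rfl⟩ | ⟨rfl, rfl⟩ <;> simp
  · intro v hv hvF
    obtain rfl := (hverts v hv).resolve_left hvF
    refine Or.inr ⟨⟨u, huw.symm⟩, z, hzC, hzw, ?_⟩
    rintro e (rfl | rfl) - hze <;> simp at hze <;> grind

/-- Attaching a triangle `u b c` at `u`: add `ubx`, `ucx`, `ubc`, `bcy`, with `x` a neighbour of `u`
and `y` any other old vertex. -/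
theorem Realizes.triangle {α : Type*} [DecidableEq α] {G : SimpleGraph α} {C : Finset α}
    {F F' : G.Subgraph} {ℰ : Set (Finset α)} (h : Realizes C F ℰ) (hC : 5 ≤ C.card) (hle : F ≤ F')
    {u b c : α} (hu : u ∈ F.verts) (hb : b ∉ F.verts) (hc : c ∉ F.verts) (hbc' : b ≠ c)
    (hub : F'.Adj u b) (hbc : F'.Adj b c) (hcu : F'.Adj c u)
    (hadj : ∀ x y, F'.Adj x y → F.Adj x y ∨ s(x, y) = s(u, b) ∨ s(x, y) = s(b, c) ∨
      s(x, y) = s(c, u))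
    (hverts : ∀ v ∈ F'.verts, v ∈ F.verts ∨ v = b ∨ v = c) : ∃ ℰ', Realizes C F' ℰ' := by
  obtain ⟨x, hx⟩ := h.exists_adj hu
  have hxF := hx.snd_mem
  obtain ⟨y, hyC, hy⟩ : ∃ z ∈ C, z ∉ ({u, x} : Finset α) :=
    Finset.exists_mem_notMem_of_card_lt_card (Finset.card_le_two.trans_lt (by omega))
  simp only [Finset.mem_insert, Finset.mem_singleton, not_or] at hy
  have hyF := h.mem_verts hyC
  have hux := hx.ne
  refine ⟨_, h.extend hle {{u, b, x}, {u, c, x}, {u, b, c}, {b, c, y}} ?_ ?_ ?_ ?_ ?_ ?_⟩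
  · rintro e (rfl | rfl | rfl | rfl) <;> rw [Finset.card_eq_three]
    · exact ⟨u, b, x, by grind⟩
    · exact ⟨u, c, x, by grind⟩
    · exact ⟨u, b, c, by grind⟩
    · exact ⟨b, c, y, by grind⟩
  · have h1 := hle.1 hu
    have h2 := hle.1 hxF
    have h3 := hle.1 hyF
    have h4 := hub.snd_mem
    have h5 := hbc.snd_mem
    rintro e (rfl | rfl | rfl | rfl) v hv <;> simp at hv <;> grind
  · have h1 := hub.adj_sub
    have h2 := hbc.adj_sub
    have h3 := hcu.adj_sub
    have h4 := hx.adj_sub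
    have h1' := h1.symm
    have h2' := h2.symm
    have h3' := h3.symm
    have h4' := h4.symm
    rintro e (rfl | rfl | rfl | rfl) e' (rfl | rfl | rfl | rfl) hne p q hpq <;>
      simp at hne ⊢ <;> grind
  · have := hx.symm
    rintro e (rfl | rfl | rfl | rfl) p q hpq hp hq <;> simp at hp hq <;> grind
  · have n1 : ({u, b, x} : Finset α) ≠ {u, b, c} := fun heq => by
      have : x ∈ ({u, b, c} : Finset α) := heq ▸ (by simp)
      simp at this; grind
    have n2 : ({u, c, x} : Finset α) ≠ {u, b, c} := fun heq => by
      have : x ∈ ({u, b, c} : Finset α) := heq ▸ (by simp)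
      simp at this; grind
    have n3 : ({u, b, c} : Finset α) ≠ {b, c, y} := fun heq => by
      have : u ∈ ({b, c, y} : Finset α) := heq ▸ (by simp)
      simp at this; grind
    intro p q hpq
    rcases hadj p q hpq with hpq | hpq | hpq | hpq
    · exact Or.inl hpq
    · refine Or.inr ⟨{u, b, x}, by simp, {u, b, c}, by simp, n1, ?_⟩
      rw [Sym2.eq_iff] at hpq
      rcases hpq with ⟨rfl, rfl⟩ | ⟨rfl, rfl⟩ <;> simp
    · refine Or.inr ⟨{u, b, c}, by simp, {b, c, y}, by simp, n3, ?_⟩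
      rw [Sym2.eq_iff] at hpq
      rcases hpq with ⟨rfl, rfl⟩ | ⟨rfl, rfl⟩ <;> simp
    · refine Or.inr ⟨{u, c, x}, by simp, {u, b, c}, by simp, n2, ?_⟩
      rw [Sym2.eq_iff] at hpq
      rcases hpq with ⟨rfl, rfl⟩ | ⟨rfl, rfl⟩ <;> simp
  · intro v hv hvF
    rcases (hverts v hv).resolve_left hvF with rfl | rfl
    · exact Or.inl ⟨u, c, by grind, hub.symm, hbc⟩
    · exact Or.inl ⟨u, b, by grind, hcu, hbc.symm⟩

/-- Attaching a 4-cycle `u b c d` at `u`: add `ubc`, `ubd`, `bcx`, `udx`, `cdy`, `cdz`, with `x` a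
neighbour of `u` and `y`, `z` two further old vertices. -/
theorem Realizes.quadrilateral {α : Type*} [DecidableEq α] {G : SimpleGraph α} {C : Finset α}
    {F F' : G.Subgraph} {ℰ : Set (Finset α)} (h : Realizes C F ℰ) (hC : 5 ≤ C.card) (hle : F ≤ F')
    {u b c d : α} (hu : u ∈ F.verts) (hb : b ∉ F.verts) (hc : c ∉ F.verts) (hd : d ∉ F.verts)
    (hbc' : b ≠ c) (hbd' : b ≠ d) (hcd' : c ≠ d)
    (hub : F'.Adj u b) (hbc : F'.Adj b c) (hcd : F'.Adj c d) (hdu : F'.Adj d u)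
    (hadj : ∀ x y, F'.Adj x y → F.Adj x y ∨ s(x, y) = s(u, b) ∨ s(x, y) = s(b, c) ∨
      s(x, y) = s(c, d) ∨ s(x, y) = s(d, u))
    (hverts : ∀ v ∈ F'.verts, v ∈ F.verts ∨ v = b ∨ v = c ∨ v = d) : ∃ ℰ', Realizes C F' ℰ' := by
  obtain ⟨x, hx⟩ := h.exists_adj hu
  have hxF := hx.snd_mem
  obtain ⟨y, hyC, hy⟩ : ∃ z ∈ C, z ∉ ({u, x} : Finset α) :=
    Finset.exists_mem_notMem_of_card_lt_card (Finset.card_le_two.trans_lt (by omega))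
  obtain ⟨z, hzC, hz⟩ : ∃ z ∈ C, z ∉ ({u, x, y} : Finset α) :=
    Finset.exists_mem_notMem_of_card_lt_card (Finset.card_le_three.trans_lt (by omega))
  simp only [Finset.mem_insert, Finset.mem_singleton, not_or] at hy hz
  have hyF := h.mem_verts hyC
  have hzF := h.mem_verts hzC
  have hux := hx.ne
  refine ⟨_, h.extend hle {{u, b, c}, {u, b, d}, {b, c, x}, {u, d, x}, {c, d, y}, {c, d, z}}
    ?_ ?_ ?_ ?_ ?_ ?_⟩
  · rintro e (rfl | rfl | rfl | rfl | rfl | rfl) <;> rw [Finset.card_eq_three]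
    · exact ⟨u, b, c, by grind⟩
    · exact ⟨u, b, d, by grind⟩
    · exact ⟨b, c, x, by grind⟩
    · exact ⟨u, d, x, by grind⟩
    · exact ⟨c, d, y, by grind⟩
    · exact ⟨c, d, z, by grind⟩
  · have h1 := hle.1 hu
    have h2 := hle.1 hxF
    have h3 := hle.1 hyF
    have h3 := hle.1 hzF
    have h4 := hub.snd_mem
    have h5 := hbc.snd_mem
    have h6 := hcd.snd_mem
    rintro e (rfl | rfl | rfl | rfl | rfl | rfl) v hv <;> simp at hv <;> grind
  · have h1 := hub.adj_sub
    have h2 := hbc.adj_sub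
    have h3 := hcd.adj_sub
    have h4 := hx.adj_sub
    have h5 := hdu.adj_sub
    have h1' := h1.symm
    have h2' := h2.symm
    have h3' := h3.symm
    have h4' := h4.symm
    have h5' := h5.symm
    rintro e (rfl | rfl | rfl | rfl | rfl | rfl) e' (rfl | rfl | rfl | rfl | rfl | rfl) hne p q hpq
      <;> simp at hne ⊢ <;> grind
  · have := hx.symm
    rintro e (rfl | rfl | rfl | rfl | rfl | rfl) p q hpq hp hq <;> simp at hp hq <;> grind
  · have n1 : ({u, b, c} : Finset α) ≠ {u, b, d} := fun heq => by
      have : c ∈ ({u, b, d} : Finset α) := heq ▸ (by simp)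
      simp at this; grind
    have n2 : ({u, b, c} : Finset α) ≠ {b, c, x} := fun heq => by
      have : u ∈ ({b, c, x} : Finset α) := heq ▸ (by simp)
      simp at this; grind
    have n3 : ({c, d, y} : Finset α) ≠ {c, d, z} := fun heq => by
      have : y ∈ ({c, d, z} : Finset α) := heq ▸ (by simp)
      simp at this; grind
    have n4 : ({u, b, d} : Finset α) ≠ {u, d, x} := fun heq => by
      have : b ∈ ({u, d, x} : Finset α) := heq ▸ (by simp)
      simp at this; grind
    intro p q hpq
    rcases hadj p q hpq with hpq | hpq | hpq | hpq | hpq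
    · exact Or.inl hpq
    · refine Or.inr ⟨{u, b, c}, by simp, {u, b, d}, by simp, n1, ?_⟩
      rw [Sym2.eq_iff] at hpq
      rcases hpq with ⟨rfl, rfl⟩ | ⟨rfl, rfl⟩ <;> simp
    · refine Or.inr ⟨{u, b, c}, by simp, {b, c, x}, by simp, n2, ?_⟩
      rw [Sym2.eq_iff] at hpq
      rcases hpq with ⟨rfl, rfl⟩ | ⟨rfl, rfl⟩ <;> simp
    · refine Or.inr ⟨{c, d, y}, by simp, {c, d, z}, by simp, n3, ?_⟩
      rw [Sym2.eq_iff] at hpq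
      rcases hpq with ⟨rfl, rfl⟩ | ⟨rfl, rfl⟩ <;> simp
    · refine Or.inr ⟨{u, b, d}, by simp, {u, d, x}, by simp, n4, ?_⟩
      rw [Sym2.eq_iff] at hpq
      rcases hpq with ⟨rfl, rfl⟩ | ⟨rfl, rfl⟩ <;> simp
  · intro v hv hvF
    rcases (hverts v hv).resolve_left hvF with rfl | rfl | rfl
    · exact Or.inl ⟨u, c, by grind, hub.symm, hbc⟩
    · exact Or.inl ⟨b, d, by grind, hbc.symm, hcd⟩
    · exact Or.inl ⟨u, c, by grind, hdu, hcd.symm⟩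

/-- The triples of consecutive vertices of a closed sequence `f : ZMod k → α`. -/
def consecutive {α : Type*} [DecidableEq α] {k : ℕ} (f : ZMod k → α) : Set (Finset α) :=
  Set.range fun i => {f i, f (i + 1), f (i + 2)}

theorem natCast_ne_zero_of_lt {k n : ℕ} (hn : 0 < n) (hnk : n < k) : (n : ZMod k) ≠ 0 := by
  rw [Ne, ZMod.natCast_eq_zero_iff]
  exact Nat.not_dvd_of_pos_of_lt hn hnk

theorem consecutive_card {α : Type*} [DecidableEq α] {k : ℕ} (hk : 3 ≤ k) {f : ZMod k → α}
    (hf : Function.Injective f) : ∀ e ∈ consecutive f, e.card = 3 := by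
  have h1 := natCast_ne_zero_of_lt (k := k) (n := 1) (by omega) (by omega)
  have h2 := natCast_ne_zero_of_lt (k := k) (n := 2) (by omega) (by omega)
  push_cast at h1 h2
  rintro _ ⟨i, rfl⟩
  refine Finset.card_eq_three.2 ⟨_, _, _, hf.ne ?_, hf.ne ?_, hf.ne ?_, rfl⟩
  · exact fun h => h1 (by linear_combination -h)
  · exact fun h => h2 (by linear_combination -h)
  · exact fun h => h1 (by linear_combination -h)

/-- On a cycle of length at least five, two distinct consecutive triples meet in an edge of the
cycle or in at most one vertex. (In a 4-cycle, opposite triples would meet in a diagonal.) -/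
theorem consecutive_inter {α : Type*} [DecidableEq α] {G : SimpleGraph α} {k : ℕ} (hk : 5 ≤ k)
    {f : ZMod k → α} (hf : Function.Injective f) (hadj : ∀ i, G.Adj (f i) (f (i + 1))) :
    ∀ e₁ ∈ consecutive f, ∀ e₂ ∈ consecutive f, e₁ ≠ e₂ →
      ∀ p q, p ≠ q → p ∈ e₁ → q ∈ e₁ → p ∈ e₂ → q ∈ e₂ → G.Adj p q := by
  have h1 := natCast_ne_zero_of_lt (k := k) (n := 1) (by omega) (by omega)
  have h2 := natCast_ne_zero_of_lt (k := k) (n := 2) (by omega) (by omega)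
  have h3 := natCast_ne_zero_of_lt (k := k) (n := 3) (by omega) (by omega)
  have h4 := natCast_ne_zero_of_lt (k := k) (n := 4) (by omega) (by omega)
  push_cast at h1 h2 h3 h4
  rintro _ ⟨i, rfl⟩ _ ⟨j, rfl⟩ hne p q hpq hp₁ hq₁ hp₂ hq₂
  have hij : i ≠ j := fun h => hne (by rw [h])
  have hstep : ∀ a b : ZMod k, b = a + 1 → G.Adj (f a) (f b) := fun a b h => h ▸ hadj a
  -- Any two vertices of a triple are neighbours on the cycle or are the two ends of the triple.
  have key : ∀ l : ZMod k, p ∈ ({f l, f (l + 1), f (l + 2)} : Finset α) →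
      q ∈ ({f l, f (l + 1), f (l + 2)} : Finset α) →
      G.Adj p q ∨ (p = f l ∧ q = f (l + 2)) ∨ (p = f (l + 2) ∧ q = f l) := by
    intro l hp hq
    simp only [Finset.mem_insert, Finset.mem_singleton] at hp hq
    have a1 := hstep l (l + 1) rfl
    have a2 := hstep (l + 1) (l + 2) (by ring)
    have a1' := a1.symm
    have a2' := a2.symm
    rcases hp with rfl | rfl | rfl <;> rcases hq with rfl | rfl | rfl <;> simp_all
  rcases key i hp₁ hq₁ with h | ⟨hp, hq⟩ | ⟨hp, hq⟩
  · exact h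
  · rcases key j hp₂ hq₂ with h | ⟨hp', hq'⟩ | ⟨hp', hq'⟩
    · exact h
    · exact absurd (hf (hp.symm.trans hp')) hij
    · have e1 := hf (hp.symm.trans hp')
      have e2 := hf (hq.symm.trans hq')
      exact absurd (by linear_combination e2 - e1) h4
  · rcases key j hp₂ hq₂ with h | ⟨hp', hq'⟩ | ⟨hp', hq'⟩
    · exact h
    · have e1 := hf (hp.symm.trans hp')
      have e2 := hf (hq.symm.trans hq')
      exact absurd (by linear_combination e1 - e2) h4
    · exact absurd (hf (hq.symm.trans hq')) hij

theorem consecutive_cover {α : Type*} [DecidableEq α] {k : ℕ} (hk : 5 ≤ k)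
    {f : ZMod k → α} (hf : Function.Injective f) {x y : α} {i : ZMod k}
    (hxy : s(x, y) = s(f i, f (i + 1))) : ∃ e₁ ∈ consecutive f, ∃ e₂ ∈ consecutive f,
      e₁ ≠ e₂ ∧ x ∈ e₁ ∧ y ∈ e₁ ∧ x ∈ e₂ ∧ y ∈ e₂ := by
  have h1 := natCast_ne_zero_of_lt (k := k) (n := 1) (by omega) (by omega)
  have h2 := natCast_ne_zero_of_lt (k := k) (n := 2) (by omega) (by omega)
  have h3 := natCast_ne_zero_of_lt (k := k) (n := 3) (by omega) (by omega)
  push_cast at h1 h2 h3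
  refine ⟨_, ⟨i, rfl⟩, _, ⟨i - 1, rfl⟩, ?_, ?_⟩
  · intro heq
    have hm : f (i + 2) ∈ ({f (i - 1), f (i - 1 + 1), f (i - 1 + 2)} : Finset α) := by
      have heq' : ({f i, f (i + 1), f (i + 2)} : Finset α) =
        {f (i - 1), f (i - 1 + 1), f (i - 1 + 2)} := heq
      rw [← heq']
      simp
    simp only [Finset.mem_insert, Finset.mem_singleton, hf.eq_iff] at hm
    rcases hm with hm | hm | hm
    · exact h3 (by linear_combination hm)
    · exact h2 (by linear_combination hm)
    · exact h1 (by linear_combination hm)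
  · have e1 : i - 1 + 1 = i := by ring
    have e2 : i - 1 + 2 = i + 1 := by ring
    rw [Sym2.eq_iff] at hxy
    rcases hxy with ⟨rfl, rfl⟩ | ⟨rfl, rfl⟩ <;> simp [e1, e2]

theorem twoNbrs_of_cyclic {α : Type*} {G : SimpleGraph α} {F : G.Subgraph} {k : ℕ} (hk : 3 ≤ k)
    {f : ZMod k → α} (hf : Function.Injective f) (hadj : ∀ i, F.Adj (f i) (f (i + 1)))
    (i : ZMod k) : TwoNbrs F (f i) := by
  have h2 := natCast_ne_zero_of_lt (k := k) (n := 2) (by omega) (by omega)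
  push_cast at h2
  have := hadj (i - 1)
  rw [sub_add_cancel] at this
  refine ⟨f (i + 1), f (i - 1), hf.ne ?_, hadj i, F.adj_symm this⟩
  exact fun h => h2 (by linear_combination h)

/-- A cycle of length at least five meeting `F` only in `f 0` is attached by its own consecutive
triples. -/
theorem Realizes.longCycle {α : Type*} [DecidableEq α] {G : SimpleGraph α} {C : Finset α}
    {F F' : G.Subgraph} {ℰ : Set (Finset α)} (h : Realizes C F ℰ) (hle : F ≤ F') {k : ℕ}
    (hk : 5 ≤ k) {f : ZMod k → α} (hf : Function.Injective f) (hfF : ∀ i, f i ∈ F.verts → i = 0)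
    (hf' : ∀ i, F'.Adj (f i) (f (i + 1)))
    (hadj : ∀ x y, F'.Adj x y → F.Adj x y ∨ ∃ i, s(x, y) = s(f i, f (i + 1)))
    (hverts : ∀ v ∈ F'.verts, v ∈ F.verts ∨ ∃ i, v = f i) : ∃ ℰ', Realizes C F' ℰ' := by
  have hmem : ∀ e ∈ consecutive f, ∀ v ∈ e, ∃ i, v = f i := by
    rintro _ ⟨i, rfl⟩ v hv
    simp only [Finset.mem_insert, Finset.mem_singleton] at hv
    rcases hv with hv | hv | hv <;> exact ⟨_, hv⟩
  refine ⟨_, h.extend hle (consecutive f) (consecutive_card (by omega) hf) ?_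
    (consecutive_inter hk hf fun i => (hf' i).adj_sub) ?_ ?_ ?_⟩
  · intro e he v hv
    obtain ⟨i, rfl⟩ := hmem e he v hv
    exact (hf' i).fst_mem
  · intro e he p q hpq hp hq hpF hqF
    obtain ⟨i, rfl⟩ := hmem e he p hp
    obtain ⟨j, rfl⟩ := hmem e he q hq
    exact absurd (by rw [hfF i hpF, hfF j hqF]) hpq
  · intro x y hxy
    rcases hadj x y hxy with hxy | ⟨i, hi⟩
    · exact Or.inl hxy
    · exact Or.inr (consecutive_cover hk hf hi)
  · intro v hv hvF
    obtain ⟨i, rfl⟩ := (hverts v hv).resolve_left hvF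
    exact Or.inl (twoNbrs_of_cyclic (by omega) hf hf' i)

theorem Realizes.cycle {α : Type*} [DecidableEq α] {G : SimpleGraph α} {C : Finset α}
    {F F' : G.Subgraph} {ℰ : Set (Finset α)} (h : Realizes C F ℰ) (hC : 5 ≤ C.card) (hle : F ≤ F')
    {k : ℕ} (hk : 3 ≤ k) {f : ZMod k → α} (hf : Function.Injective f)
    (hfF : ∀ i, f i ∈ F.verts ↔ i = 0) (hf' : ∀ i, F'.Adj (f i) (f (i + 1)))
    (hadj : ∀ x y, F'.Adj x y → F.Adj x y ∨ ∃ i, s(x, y) = s(f i, f (i + 1)))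
    (hverts : ∀ v ∈ F'.verts, v ∈ F.verts ∨ ∃ i, v = f i) : ∃ ℰ', Realizes C F' ℰ' := by
  rcases (by omega : k = 3 ∨ k = 4 ∨ 5 ≤ k) with rfl | rfl | hk
  · have all : ∀ i : ZMod 3, i = 0 ∨ i = 1 ∨ i = 2 := by decide
    refine h.triangle hC hle (u := f 0) (b := f 1) (c := f 2) ((hfF 0).2 rfl)
      (fun hm => absurd ((hfF _).1 hm) (by decide)) (fun hm => absurd ((hfF _).1 hm) (by decide))
      (hf.ne (by decide)) (hf' 0) (hf' 1) (hf' 2) ?_ ?_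
    · intro x y hxy
      rcases hadj x y hxy with hxy | ⟨i, hi⟩
      · exact Or.inl hxy
      · rcases all i with rfl | rfl | rfl
        exacts [Or.inr (Or.inl hi), Or.inr (Or.inr (Or.inl hi)), Or.inr (Or.inr (Or.inr hi))]
    · intro v hv
      rcases hverts v hv with hv | ⟨i, rfl⟩
      · exact Or.inl hv
      · rcases all i with rfl | rfl | rfl
        exacts [Or.inl ((hfF 0).2 rfl), Or.inr (Or.inl rfl), Or.inr (Or.inr rfl)]
  · have all : ∀ i : ZMod 4, i = 0 ∨ i = 1 ∨ i = 2 ∨ i = 3 := by decide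
    refine h.quadrilateral hC hle (u := f 0) (b := f 1) (c := f 2) (d := f 3) ((hfF 0).2 rfl)
      (fun hm => absurd ((hfF _).1 hm) (by decide)) (fun hm => absurd ((hfF _).1 hm) (by decide))
      (fun hm => absurd ((hfF _).1 hm) (by decide)) (hf.ne (by decide)) (hf.ne (by decide))
      (hf.ne (by decide)) (hf' 0) (hf' 1) (hf' 2) (hf' 3) ?_ ?_
    · intro x y hxy
      rcases hadj x y hxy with hxy | ⟨i, hi⟩
      · exact Or.inl hxy
      · rcases all i with rfl | rfl | rfl | rfl
        exacts [Or.inr (Or.inl hi), Or.inr (Or.inr (Or.inl hi)),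
          Or.inr (Or.inr (Or.inr (Or.inl hi))), Or.inr (Or.inr (Or.inr (Or.inr hi)))]
    · intro v hv
      rcases hverts v hv with hv | ⟨i, rfl⟩
      · exact Or.inl hv
      · rcases all i with rfl | rfl | rfl | rfl
        exacts [Or.inl ((hfF 0).2 rfl), Or.inr (Or.inl rfl), Or.inr (Or.inr (Or.inl rfl)),
          Or.inr (Or.inr (Or.inr rfl))]
  · exact h.longCycle hle hk hf (fun i => (hfF i).1) hf' hadj hverts

/-! ### Growing a realized subgraph -/

/-- A cycle of length at least five realizes itself, with its vertex set as the reservoir `C`. -/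
theorem exists_initial {α : Type*} [DecidableEq α] {G : SimpleGraph α} {u : α} {p : G.Walk u u}
    (hp : p.IsCycle) (hlen : 5 ≤ p.length) :
    ∃ (C : Finset α) (ℰ : Set (Finset α)), 5 ≤ C.card ∧ Realizes C p.toSubgraph ℰ := by
  obtain ⟨f, hf, -, hf', hadj, hverts, hmem⟩ := exists_cyclic_param hp
  have : NeZero p.length := ⟨by omega⟩
  have hT := twoNbrs_of_cyclic (by omega) hf hf'
  refine ⟨Finset.univ.image f, consecutive f, ?_, consecutive_card (by omega) hf, ?_,
    consecutive_inter hlen hf fun i => (hf' i).adj_sub, ?_, ?_, ?_⟩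
  · rw [Finset.card_image_of_injective _ hf, Finset.card_univ, ZMod.card]
    exact hlen
  · rintro _ ⟨i, rfl⟩ v hv
    simp only [Finset.mem_insert, Finset.mem_singleton] at hv
    rcases hv with rfl | rfl | rfl <;> exact hmem _
  · intro x y hxy
    obtain ⟨i, hi⟩ := hadj x y hxy
    exact consecutive_cover hlen hf hi
  · intro v hv
    obtain ⟨i, rfl⟩ := hverts v hv
    exact Or.inl (hT i)
  · intro c hc
    obtain ⟨i, -, rfl⟩ := Finset.mem_image.1 hc
    exact hT i

theorem cycleClosed_toSubgraph {α : Type*} {G : SimpleGraph α} (hG : IsCactus G) {u : α}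
    {p : G.Walk u u} (hp : p.IsCycle) : CycleClosed p.toSubgraph := by
  rintro v q hq ⟨e, heq, hep⟩ f hf
  rw [Walk.mem_edges_toSubgraph] at hep ⊢
  exact (hG.2 q p hq hp ⟨e, heq, hep⟩ f).1 hf

/-- A realized, connected and cycle-closed proper subgraph of a cactus can be enlarged: by a bridge
leaving it, or by the whole cycle through an edge leaving it. -/
theorem exists_larger {α : Type*} [DecidableEq α] {G : SimpleGraph α} (hG : IsCactus G)
    {C : Finset α} (hC : 5 ≤ C.card) {F : G.Subgraph} {ℰ : Set (Finset α)} (hF : F.Connected)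
    (hFc : CycleClosed F) (h : Realizes C F ℰ) {u w : α} (hu : u ∈ F.verts) (hw : w ∉ F.verts)
    (huw : G.Adj u w) :
    ∃ (F' : G.Subgraph) (ℰ' : Set (Finset α)), F < F' ∧ F'.Connected ∧ CycleClosed F' ∧
      Realizes C F' ℰ' := by
  by_cases hcyc : ∃ (v : α) (p : G.Walk v v), p.IsCycle ∧ s(u, w) ∈ p.edges
  · obtain ⟨v, p₀, hp₀, he₀⟩ := hcyc
    obtain ⟨p, hp, he⟩ : ∃ p : G.Walk u u, p.IsCycle ∧ s(u, w) ∈ p.edges :=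
      ⟨p₀.rotate u (p₀.fst_mem_support_of_mem_edges he₀), hp₀.rotate _,
        (p₀.rotate_edges u _).mem_iff.2 he₀⟩
    have hpc := cycleClosed_toSubgraph hG hp
    have hpu : u ∈ p.toSubgraph.verts := p.start_mem_verts_toSubgraph
    have hpw : w ∈ p.toSubgraph.verts := (Walk.adj_toSubgraph_iff_mem_edges.2 he).snd_mem
    obtain ⟨f, hf, hf0, hf', hadj, hverts, hmem⟩ := exists_cyclic_param hp
    -- A second common vertex would put the whole cycle, and with it `w`, into `F`.
    have hfF : ∀ i, f i ∈ F.verts ↔ i = 0 := by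
      refine fun i => ⟨fun hi => ?_, fun hi => by rwa [hi, hf0]⟩
      by_contra hne
      obtain ⟨e, heF, hep⟩ := exists_common_edge hF p.toSubgraph_connected hFc
        (show u ≠ f i from fun hui => hne (hf (by rw [← hui, hf0]))) hu hi hpu (hmem i)
      rw [Walk.mem_edges_toSubgraph] at hep
      have hadj : F.Adj u w := hFc p hp ⟨e, hep, heF⟩ _ he
      exact hw hadj.snd_mem
    obtain ⟨ℰ', hreal⟩ := h.cycle (F' := F ⊔ p.toSubgraph) hC le_sup_left hp.three_le_length hf hfF
      (fun i => Or.inr (hf' i))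
      (fun x y hxy => hxy.imp id (hadj x y)) (fun v hv => hv.imp id (hverts v))
    exact ⟨_, ℰ', lt_of_le_of_ne le_sup_left fun heq => hw (heq ▸ Or.inr hpw),
      Subgraph.connected_sup hF.preconnected p.toSubgraph_connected.preconnected ⟨u, hu, hpu⟩,
      hFc.sup hpc, hreal⟩
  · have hbc : CycleClosed (G.subgraphOfAdj huw) := by
      rintro v p hp ⟨e, hep, he⟩
      rw [edgeSet_subgraphOfAdj, Set.mem_singleton_iff] at he
      exact absurd ⟨v, p, hp, he ▸ hep⟩ hcyc
    have hsu : u ∈ (G.subgraphOfAdj huw).verts := by simp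
    have hsw : w ∈ (G.subgraphOfAdj huw).verts := by simp
    obtain ⟨ℰ', hreal⟩ := h.pendant (F' := F ⊔ G.subgraphOfAdj huw) hC le_sup_left hu hw
      (Or.inr (by simp)) (fun x y hxy => hxy.imp id fun hxy => by simpa [eq_comm] using hxy)
      (fun v hv => by
        rcases hv with hv | hv
        · exact Or.inl hv
        · rw [subgraphOfAdj_verts] at hv
          rcases hv with rfl | rfl
          exacts [Or.inl hu, Or.inr rfl])
    exact ⟨_, ℰ', lt_of_le_of_ne le_sup_left fun heq => hw (heq ▸ Or.inr hsw),
      Subgraph.connected_sup hF.preconnected (Subgraph.subgraphOfAdj_connected huw).preconnected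
        ⟨u, hu, hsu⟩, hFc.sup hbc, hreal⟩

/-- A realization of a subgraph containing all edges of `G` has edge intersection hypergraph `G`:
distinct triples meet in at most two vertices, so the intersections of size at least two are
exactly the edges. -/
theorem Realizes.isEI {α : Type*} [DecidableEq α] {G : SimpleGraph α} {C : Finset α}
    {F : G.Subgraph} {ℰ : Set (Finset α)} (h : Realizes C F ℰ) (hF : ∀ x y, G.Adj x y → F.Adj x y) :
    IsEIofThreeUniform G := by
  have hcard : ∀ e₁ ∈ ℰ, ∀ e₂ ∈ ℰ, e₁ ≠ e₂ → (e₁ ∩ e₂).card ≤ 2 := by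
    intro e₁ h₁ e₂ h₂ hne
    by_contra! hlt
    have c₁ := h.card3 e₁ h₁
    have c₂ := h.card3 e₂ h₂
    have i₁ := Finset.eq_of_subset_of_card_le (Finset.inter_subset_left (s₁ := e₁) (s₂ := e₂))
      (by omega)
    have i₂ := Finset.eq_of_subset_of_card_le (Finset.inter_subset_right (s₁ := e₁) (s₂ := e₂))
      (by omega)
    exact hne (i₁.symm.trans i₂)
  refine ⟨ℰ, h.card3, Set.ext fun s => ⟨?_, ?_⟩⟩
  · rintro ⟨e₁, h₁, e₂, h₂, hne, h2, rfl⟩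
    obtain ⟨p, q, hpq, heq⟩ := Finset.card_eq_two.1 (le_antisymm (hcard e₁ h₁ e₂ h₂ hne) h2)
    have hp : p ∈ e₁ ∩ e₂ := by simp [heq]
    have hq : q ∈ e₁ ∩ e₂ := by simp [heq]
    rw [Finset.mem_inter] at hp hq
    exact ⟨p, q, h.inter e₁ h₁ e₂ h₂ hne p q hpq hp.1 hq.1 hp.2 hq.2, heq⟩
  · rintro ⟨p, q, hpq, rfl⟩
    obtain ⟨e₁, h₁, e₂, h₂, hne, hp₁, hq₁, hp₂, hq₂⟩ := h.cover p q (hF p q hpq)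
    have hsub : {p, q} ⊆ e₁ ∩ e₂ := by
      intro x hx
      simp only [Finset.mem_insert, Finset.mem_singleton] at hx
      rcases hx with rfl | rfl <;> simp [*]
    have hc2 : ({p, q} : Finset α).card = 2 := Finset.card_pair hpq.ne
    have heq := Finset.eq_of_subset_of_card_le hsub (by rw [hc2]; exact hcard e₁ h₁ e₂ h₂ hne)
    exact ⟨e₁, h₁, e₂, h₂, hne, by rw [← heq, hc2], heq⟩

end CactusEI

/-- Every cactus `G` with circumference `ci(G) ≥ 5` is an edge
intersection hypergraph of a 3-uniform hypergraph. -/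
theorem cactus_circumference_ge_five_EI {α : Type*} [Fintype α] [DecidableEq α]
    (G : SimpleGraph α) (hcactus : IsCactus G)
    (hci : ∃ (u : α) (p : G.Walk u u), p.IsCycle ∧ 5 ≤ p.length) :
    IsEIofThreeUniform G := by
  obtain ⟨u₀, p, hp, hlen⟩ := hci
  obtain ⟨C, ℰ₀, hC, h₀⟩ := CactusEI.exists_initial hp hlen
  obtain ⟨F, ⟨hF, hFc, ℰ, h⟩, hmax⟩ := Set.Finite.exists_maximal
    (Set.toFinite {F : G.Subgraph | F.Connected ∧ CactusEI.CycleClosed F ∧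
      ∃ ℰ, CactusEI.Realizes C F ℰ})
    ⟨_, p.toSubgraph_connected, CactusEI.cycleClosed_toSubgraph hcactus hp, ℰ₀, h₀⟩
  have hstep : ∀ x y, G.Adj x y → x ∈ F.verts → y ∈ F.verts := by
    intro x y hxy hx
    by_contra hy
    obtain ⟨F', ℰ', hlt, hF', hFc', h'⟩ :=
      CactusEI.exists_larger hcactus hC hF hFc h hx hy hxy
    exact hlt.not_ge (hmax ⟨hF', hFc', ℰ', h'⟩ hlt.le)
  obtain ⟨c, hc⟩ : C.Nonempty := Finset.card_pos.1 (by omega)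
  have hall : ∀ v, v ∈ F.verts := by
    intro v
    obtain ⟨q⟩ := hcactus.1.preconnected c v
    have hwalk : ∀ {a b : α} (q : G.Walk a b), a ∈ F.verts → b ∈ F.verts := by
      intro a b q
      induction q with
      | nil => exact id
      | cons hab _ ih => exact fun ha => ih (hstep _ _ hab ha)
    exact hwalk q (h.mem_verts hc)
  refine h.isEI fun x y hxy => ?_
  -- A cycle-closed connected spanning subgraph contains every edge of `G`.
  obtain ⟨e, heF, hexy⟩ := CactusEI.exists_common_edge hF
    (SimpleGraph.Subgraph.subgraphOfAdj_connected hxy) hFc hxy.ne (hall x) (hall y)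
    (by simp) (by simp)
  rw [SimpleGraph.edgeSet_subgraphOfAdj, Set.mem_singleton_iff] at hexy
  rwa [hexy] at heF
end

section
/- Every tree that is not isomorphic to any of P₂, P₃, P₄, P₅, P₆, T7, T12 is an edge intersection hypergraph of a 3-uniform hypergraph. -/
/-- The tree `T7` on 5 vertices `v₁,…,v₅` with edges
`{v₁,v₂}, {v₂,v₃}, {v₃,v₄}, {v₃,v₅}`. -/
def treeT7 : SimpleGraph (Fin 5) :=
  SimpleGraph.fromEdgeSet {s(0, 1), s(1, 2), s(2, 3), s(2, 4)}

/-- The tree `T12` on 6 vertices `v₁,…,v₆` with edges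
`{v₁,v₂}, {v₂,v₃}, {v₃,v₄}, {v₂,v₅}, {v₅,v₆}`. -/
def treeT12 : SimpleGraph (Fin 6) :=
  SimpleGraph.fromEdgeSet {s(0, 1), s(1, 2), s(2, 3), s(1, 4), s(4, 5)}

/-! ### Realisation by triples of vertices -/

/-- `T` holds of `a`, `b`, `c` in some order. -/
def Sym3 {α : Type*} (T : α → α → α → Prop) (a b c : α) : Prop :=
  T a b c ∨ T a c b ∨ T b a c ∨ T b c a ∨ T c a b ∨ T c b a

/-- A ternary relation `T` on distinct vertices realises `G` as soon as every edge of `G` lies in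
two triples of `T` and every non-edge in at most one: two distinct triples meet in two vertices
exactly when they share a pair. -/
lemma isEI_of_triples {α : Type*} [DecidableEq α] (G : SimpleGraph α) (T : α → α → α → Prop)
    (hd : ∀ a b c, T a b c → a ≠ b ∧ a ≠ c ∧ b ≠ c)
    (hE : ∀ u v, G.Adj u v → ∃ x y, x ≠ y ∧ Sym3 T u v x ∧ Sym3 T u v y)
    (hN : ∀ a b x y, a ≠ b → ¬ G.Adj a b → Sym3 T a b x → Sym3 T a b y → x = y) :
    IsEIofThreeUniform G := by
  have hmem : ∀ a b c, Sym3 T a b c → ∃ p q r, T p q r ∧ ({a, b, c} : Finset α) = {p, q, r} := by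
    intro a b c h
    rcases h with h | h | h | h | h | h <;>
      exact ⟨_, _, _, h, by ext; simp <;> tauto⟩
  have hdS : ∀ a b c, Sym3 T a b c → a ≠ b ∧ a ≠ c ∧ b ≠ c := by
    intro a b c h
    rcases h with h | h | h | h | h | h <;> have := hd _ _ _ h <;> grind
  have hsym : ∀ a b p q r, T p q r → a ≠ b → a ∈ ({p, q, r} : Finset α) →
      b ∈ ({p, q, r} : Finset α) → ∃ x, Sym3 T a b x ∧ ({p, q, r} : Finset α) = {a, b, x} := by
    intro a b p q r h hab ha hb
    simp only [Finset.mem_insert, Finset.mem_singleton] at ha hb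
    rcases ha with rfl | rfl | rfl <;> rcases hb with rfl | rfl | rfl <;>
      first
      | exact absurd rfl hab
      | exact ⟨p, by unfold Sym3; tauto, by ext; simp <;> tauto⟩
      | exact ⟨q, by unfold Sym3; tauto, by ext; simp; tauto⟩
      | exact ⟨r, by unfold Sym3; tauto, by ext; simp <;> tauto⟩
  refine ⟨{e | ∃ a b c, T a b c ∧ e = {a, b, c}}, ?_, ?_⟩
  · rintro e ⟨a, b, c, h, rfl⟩
    exact Finset.card_eq_three.2 ⟨a, b, c, (hd _ _ _ h).1, (hd _ _ _ h).2.1, (hd _ _ _ h).2.2, rfl⟩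
  · ext s
    constructor
    · rintro ⟨e₁, ⟨a, b, c, h, rfl⟩, e₂, ⟨a', b', c', h', rfl⟩, hne, hcard, rfl⟩
      obtain ⟨p, hp, q, hq, hpq⟩ := Finset.one_lt_card.1 hcard
      rw [Finset.mem_inter] at hp hq
      obtain ⟨x, hx, ex⟩ := hsym p q a b c h hpq hp.1 hq.1
      obtain ⟨y, hy, ey⟩ := hsym p q a' b' c' h' hpq hp.2 hq.2
      rw [ex, ey] at hne ⊢
      have hxy : x ≠ y := by rintro rfl; exact hne rfl
      refine ⟨p, q, ?_, ?_⟩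
      · by_contra hn
        exact hxy (hN p q x y hpq hn hx hy)
      · have := hdS _ _ _ hx
        have := hdS _ _ _ hy
        ext; simp; grind
    · rintro ⟨u, v, huv, rfl⟩
      obtain ⟨x, y, hxy, hx, hy⟩ := hE u v huv
      have h1 := hdS _ _ _ hx
      have h2 := hdS _ _ _ hy
      have hint : ({u, v} : Finset α) = {u, v, x} ∩ {u, v, y} := by ext; simp; grind
      refine ⟨{u, v, x}, hmem _ _ _ hx, {u, v, y}, hmem _ _ _ hy, ?_, ?_, hint⟩
      · intro h
        have : x ∈ ({u, v, y} : Finset α) := h ▸ by simp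
        simp at this
        grind
      · rw [← hint, Finset.card_pair h1.1]

/-! ### Acyclic and connected graphs -/

lemma triangle_free {α : Type*} {G : SimpleGraph α} (hG : G.IsAcyclic) {a b c : α}
    (h1 : G.Adj a b) (h2 : G.Adj b c) (h3 : G.Adj a c) : False := by
  have := hG (.cons h1 (.cons h2 (.cons h3.symm .nil)))
  apply this
  have := h1.ne; have := h2.ne; have := h3.ne
  simp [SimpleGraph.Walk.isCycle_def, SimpleGraph.Walk.isTrail_def]
  grind

lemma common_nbr_unique {α : Type*} {G : SimpleGraph α} (hG : G.IsAcyclic) {a b x y : α}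
    (hab : a ≠ b) (h1 : G.Adj x a) (h2 : G.Adj x b) (h3 : G.Adj y a) (h4 : G.Adj y b) :
    x = y := by
  by_contra hxy
  have := hG (.cons h1.symm (.cons h2 (.cons h4.symm (.cons h3 .nil))))
  apply this
  have := h1.ne; have := h2.ne; have := h3.ne; have := h4.ne
  simp [SimpleGraph.Walk.isCycle_def, SimpleGraph.Walk.isTrail_def]
  grind

/-- In a connected graph, a nonempty set of vertices closed under adjacency is everything. -/
lemma mem_of_closed {α : Type*} {G : SimpleGraph α} (hG : G.Connected) (S : α → Prop) (u : α)
    (hu : S u) (hS : ∀ a b, S a → G.Adj a b → S b) (x : α) : S x := by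
  obtain ⟨p⟩ := hG.preconnected u x
  induction p with
  | nil => exact hu
  | cons h p ih => exact ih (hS _ _ hu h)

/-- A connected graph mapped bijectively on vertices, and edge-preservingly, to a tree is isomorphic
to it, because a tree is minimal among the connected graphs on its vertex set. Non-adjacencies
therefore need not be checked. -/
lemma iso_of_spanning {α : Type*} {G : SimpleGraph α} (hG : G.IsTree) {m : ℕ}
    {H : SimpleGraph (Fin m)} (hH : H.Connected) (f : Fin m → α) (hi : f.Injective)
    (hs : ∀ x, ∃ i, f i = x) (hadj : ∀ i j, H.Adj i j → G.Adj (f i) (f j)) :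
    Nonempty (G ≃g H) := by
  let e : Fin m ≃ α := Equiv.ofBijective f ⟨hi, hs⟩
  have hT : (G.comap f).IsTree := (SimpleGraph.Iso.comap e G).symm.isTree_iff.1 hG
  have hle : H ≤ G.comap f := fun i j h => hadj i j h
  have := (SimpleGraph.isTree_iff_minimal_connected.1 hT).2 hH hle
  have heq : H = G.comap f := le_antisymm hle this
  rw [heq]
  exact ⟨(SimpleGraph.Iso.comap e G).symm⟩

lemma treeT7_connected : treeT7.Connected := by
  have h1 : treeT7.Adj 0 1 := by simp [treeT7]
  have h2 : treeT7.Adj 1 2 := by simp [treeT7]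
  have h3 : treeT7.Adj 2 3 := by simp [treeT7]
  have h4 : treeT7.Adj 2 4 := by simp [treeT7]
  have r2 := h1.reachable.trans h2.reachable
  rw [SimpleGraph.connected_iff_exists_forall_reachable]
  refine ⟨0, fun i => ?_⟩
  fin_cases i
  exacts [.refl _, h1.reachable, r2, r2.trans h3.reachable, r2.trans h4.reachable]

lemma treeT12_connected : treeT12.Connected := by
  have h1 : treeT12.Adj 0 1 := by simp [treeT12]
  have h2 : treeT12.Adj 1 2 := by simp [treeT12]
  have h3 : treeT12.Adj 2 3 := by simp [treeT12]
  have h4 : treeT12.Adj 1 4 := by simp [treeT12]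
  have h5 : treeT12.Adj 4 5 := by simp [treeT12]
  have r2 := h1.reachable.trans h2.reachable
  have r4 := h1.reachable.trans h4.reachable
  rw [SimpleGraph.connected_iff_exists_forall_reachable]
  refine ⟨0, fun i => ?_⟩
  fin_cases i
  exacts [.refl _, h1.reachable, r2, r2.trans h3.reachable, r4, r4.trans h5.reachable]

/-! ### Pendant paths and the construction -/

/-- A pendant path `u - v - w`: `u` is a leaf whose only neighbour `v` has degree two, `w` being
the other neighbour of `v`. -/
def Pend {α : Type*} (G : SimpleGraph α) (u v w : α) : Prop :=
  u ≠ w ∧ (∀ x, G.Adj u x ↔ x = v) ∧ (∀ x, G.Adj v x ↔ x = u ∨ x = w)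

/-- `a`, `m` are the last two vertices of a pendant path `u - a - m`, and `b = f u`. If moreover `m`
is adjacent to `b`, the path `a - m - b` must be left out of the construction: the pair `{a, b}`
already lies in the extra triple `{u, a, f u}`. -/
def Dropped {α : Type*} (G : SimpleGraph α) (f : α → α) (a m b : α) : Prop :=
  ∃ u, Pend G u a m ∧ f u = b

/-- The triples of the construction: three-vertex subpaths `a - m - b` that are not dropped, and
`{u, v, f u}` for every pendant path `u - v - w`. -/
def Triple {α : Type*} (G : SimpleGraph α) (f : α → α) (a m b : α) : Prop :=
  (G.Adj m a ∧ G.Adj m b ∧ a ≠ b ∧ ¬ Dropped G f a m b ∧ ¬ Dropped G f b m a) ∨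
  ((∃ w, Pend G a m w) ∧ f a = b)

set_option maxHeartbeats 800000 in
/-- The construction `Triple G f` works if leaf edges of pendant paths are disjoint (`hnd`), if every
other edge lies in two subpaths (`hedge`), and if the extra vertices `f` satisfy: `f u` lies off
the pendant path of `u` (`hf`); at most one `f u` is adjacent to the corresponding `w` (`huniq`), and
such a `w` has two further neighbours (`hdeg`), so that the edges of the dropped path stay
covered twice; and the extra triples of two
pendant paths do not share a pair (`hcol`). -/
lemma isEI_of_choice {α : Type*} [DecidableEq α] {G : SimpleGraph α} (hG : G.IsAcyclic)
    (f : α → α)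
    (hnd : ∀ u v w u' v' w', Pend G u v w → Pend G u' v' w' → u ≠ u' → v ≠ v' ∧ w ≠ v')
    (hedge : ∀ u v, G.Adj u v → (∃ w, Pend G u v w) ∨ (∃ w, Pend G v u w) ∨
      ∃ x y, x ≠ y ∧ x ≠ u ∧ x ≠ v ∧ y ≠ u ∧ y ≠ v ∧ (G.Adj u x ∨ G.Adj v x) ∧
        (G.Adj u y ∨ G.Adj v y))
    (hf : ∀ u v w, Pend G u v w → f u ≠ u ∧ f u ≠ v ∧ f u ≠ w)
    (huniq : ∀ u v w u' v' w', Pend G u v w → Pend G u' v' w' → G.Adj w (f u) →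
      G.Adj w' (f u') → u = u')
    (hdeg : ∀ u v w, Pend G u v w → G.Adj w (f u) →
      ∃ p q, p ≠ q ∧ G.Adj w p ∧ G.Adj w q ∧ p ≠ v ∧ q ≠ v ∧ p ≠ f u ∧ q ≠ f u)
    (hcol : ∀ u v w u' v' w', Pend G u v w → Pend G u' v' w' → u ≠ u' →
      (f u = u' ∨ f u = v') → (f u' = u ∨ f u' = v) → False) :
    IsEIofThreeUniform G := by
  have tri : ∀ a b c, G.Adj a b → G.Adj b c → G.Adj a c → False :=
    fun a b c => triangle_free hG
  have cn : ∀ a b x y, a ≠ b → G.Adj x a → G.Adj x b → G.Adj y a → G.Adj y b → x = y :=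
    fun a b x y => common_nbr_unique hG
  have hsy : ∀ a b, G.Adj a b → G.Adj b a := fun a b h => h.symm
  have hir : ∀ a, ¬ G.Adj a a := fun a => G.irrefl
  -- a non-edge lies in a triple in one of three ways
  have key : ∀ a b x, a ≠ b → ¬ G.Adj a b → Sym3 (Triple G f) a b x →
      (G.Adj x a ∧ G.Adj x b ∧ ¬ Dropped G f a x b ∧ ¬ Dropped G f b x a) ∨
      (∃ u v w, Pend G u v w ∧ ((a = u ∧ b = f u ∧ x = v) ∨ (b = u ∧ a = f u ∧ x = v) ∨
        (a = v ∧ b = f u ∧ x = u) ∨ (b = v ∧ a = f u ∧ x = u))) := by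
    intro a b x hab hn h
    have hpath : ∀ p m q, Triple G f p m q → (G.Adj m p ∧ G.Adj m q ∧ ¬ Dropped G f p m q ∧
        ¬ Dropped G f q m p) ∨ (G.Adj p m ∧ G.Adj m p ∧ ∃ w, Pend G p m w ∧ f p = q) := by
      rintro p m q (h | ⟨⟨w, hw⟩, h⟩)
      · tauto
      · have : G.Adj p m := (hw.2.1 m).2 rfl
        exact .inr ⟨this, this.symm, w, hw, h⟩
    have hn' : ¬ G.Adj b a := fun h => hn h.symm
    rcases h with h | h | h | h | h | h <;>
      rcases hpath _ _ _ h with ⟨h1, h2, h3, h4⟩ | ⟨h1, h2, w, hw, rfl⟩ <;>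
      first
      | exact absurd h1 hn
      | exact absurd h1 hn'
      | exact absurd h2 hn
      | exact absurd h2 hn'
      | exact .inl ⟨h1, h2, h3, h4⟩
      | exact .inl ⟨h2, h1, h4, h3⟩
      | exact .inr ⟨_, _, w, hw, by tauto⟩
  have pmid : ∀ u v w, Pend G u v w → G.Adj u v ∧ G.Adj v u ∧ G.Adj v w ∧ v ≠ w := by
    intro u v w h
    have h1 : G.Adj u v := (h.2.1 v).2 rfl
    have h2 : G.Adj v w := (h.2.2 w).2 (.inr rfl)
    exact ⟨h1, h1.symm, h2, h2.ne⟩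
  -- the path `u - v - w` itself is never dropped
  have hkeep : ∀ u v w, Pend G u v w → Triple G f u v w := by
    intro u v w h
    obtain ⟨h1, h2, h3, h4⟩ := pmid _ _ _ h
    refine .inl ⟨h2, h3, h.1, ?_, ?_⟩
    · rintro ⟨u', h', -⟩
      have := pmid _ _ _ h'
      by_cases e : u' = u
      · subst e; exact hir _ this.1
      · exact (hnd _ _ _ _ _ _ h' h e).2 rfl
    · rintro ⟨u', h', -⟩
      have := pmid _ _ _ h'
      by_cases e : u' = u
      · subst e; exact h4 ((h.2.1 w).1 this.1).symm
      · exact (hnd _ _ _ _ _ _ h' h e).2 rfl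
  -- both edges of a dropped path still lie in two triples each
  have hdrop : ∀ a m b, G.Adj m a → G.Adj m b → Dropped G f a m b →
      (∃ x y, x ≠ y ∧ Sym3 (Triple G f) a m x ∧ Sym3 (Triple G f) a m y) ∧
      (∃ x y, x ≠ y ∧ Sym3 (Triple G f) m b x ∧ Sym3 (Triple G f) m b y) := by
    rintro a m _ h1 h2 ⟨u, hu, rfl⟩
    obtain ⟨p, q, hpq, hp, hq, hpa, hqa, hpf, hqf⟩ := hdeg _ _ _ hu h2
    obtain ⟨k1, k2, k3, k4⟩ := pmid _ _ _ hu
    have hone : ∀ c d, Dropped G f c m d → G.Adj m d → c = a ∧ d = f u := by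
      rintro c _ ⟨u', hu', rfl⟩ hd
      have e := huniq _ _ _ _ _ _ hu hu' h2 hd
      subst e
      exact ⟨(hu.2.1 c).1 (pmid _ _ _ hu').1, rfl⟩
    have hfa := hf _ _ _ hu
    have hpath : ∀ c d, G.Adj m c → G.Adj m d → c ≠ d → (c = a → d ≠ f u) → (d = a → c ≠ f u) →
        Triple G f c m d := by
      intro c d hc hd hcd e1 e2
      refine .inl ⟨hc, hd, hcd, fun h => ?_, fun h => ?_⟩
      · have := hone _ _ h hd; exact e1 this.1 this.2
      · have := hone _ _ h hc; exact e2 this.1 this.2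
    refine ⟨⟨u, p, ?_, ?_, ?_⟩, p, q, hpq, ?_, ?_⟩
    · rintro rfl
      exact k4 ((hu.2.1 m).1 hp.symm).symm
    · have := hkeep _ _ _ hu
      unfold Sym3; tauto
    · have := hpath a p h1 hp hpa.symm (by grind) (by grind)
      unfold Sym3; tauto
    · have := hpath p (f u) hp h2 hpf (by grind) (by grind)
      unfold Sym3; tauto
    · have := hpath q (f u) hq h2 hqf (by grind) (by grind)
      unfold Sym3; tauto
  have hswap : ∀ a b, (∃ x y, x ≠ y ∧ Sym3 (Triple G f) a b x ∧ Sym3 (Triple G f) a b y) →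
      ∃ x y, x ≠ y ∧ Sym3 (Triple G f) b a x ∧ Sym3 (Triple G f) b a y := by
    rintro a b ⟨x, y, h, h1, h2⟩
    exact ⟨x, y, h, by unfold Sym3 at *; tauto, by unfold Sym3 at *; tauto⟩
  have hpend : ∀ u v w, Pend G u v w →
      ∃ x y, x ≠ y ∧ Sym3 (Triple G f) u v x ∧ Sym3 (Triple G f) u v y := fun u v w h =>
    ⟨w, f u, (hf _ _ _ h).2.2.symm, .inl (hkeep _ _ _ h), .inl (.inr ⟨⟨w, h⟩, rfl⟩)⟩
  apply isEI_of_triples G (Triple G f)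
  · rintro a m b (⟨h1, h2, h3, -⟩ | ⟨⟨w, hw⟩, rfl⟩)
    · exact ⟨h1.ne', h3, h2.ne⟩
    · have := hf _ _ _ hw
      have : G.Adj a m := (hw.2.1 m).2 rfl
      grind [this.ne]
  · intro u v huv
    by_contra hbad
    rcases hedge u v huv with ⟨w, h⟩ | ⟨w, h⟩ | ⟨x, y, hxy, hxu, hxv, hyu, hyv, hx, hy⟩
    · exact hbad (hpend _ _ _ h)
    · exact hbad (hswap _ _ (hpend _ _ _ h))
    · have hthird : ∀ z, z ≠ u → z ≠ v → (G.Adj u z ∨ G.Adj v z) →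
          Sym3 (Triple G f) u v z := by
        rintro z hzu hzv (hz | hz)
        · have : Triple G f v u z := .inl ⟨huv, hz, hzv.symm,
            fun h => hbad (hswap _ _ (hdrop _ _ _ huv hz h).1),
            fun h => hbad (hdrop _ _ _ hz huv h).2⟩
          unfold Sym3; tauto
        · have : Triple G f u v z := .inl ⟨huv.symm, hz, hzu.symm,
            fun h => hbad (hdrop _ _ _ huv.symm hz h).1,
            fun h => hbad (hswap _ _ (hdrop _ _ _ hz huv.symm h).2)⟩
          unfold Sym3; tauto
      exact hbad ⟨x, y, hxy, hthird x hxu hxv hx, hthird y hyu hyv hy⟩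
  · intro a b x y hab hn hx hy
    -- a subpath and an extra triple that contain a common non-edge are the same triple
    have mixed : ∀ c d z z' u v w, G.Adj z c → G.Adj z d → ¬ Dropped G f c z d → Pend G u v w →
        (c = u ∧ d = f u ∧ z' = v ∨ c = v ∧ d = f u ∧ z' = u) → z = z' := by
      rintro c d z z' u v w h1 h2 h3 hp (⟨rfl, rfl, rfl⟩ | ⟨rfl, rfl, rfl⟩)
      · exact (hp.2.1 z).1 h1.symm
      · rcases (hp.2.2 z).1 h1.symm with e | rfl
        · exact e
        · exact absurd ⟨_, hp, rfl⟩ h3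
    rcases key _ _ _ hab hn hx with ⟨h1, h2, h3, h4⟩ | ⟨u, v, w, hp, hh⟩ <;>
    rcases key _ _ _ hab hn hy with ⟨h1', h2', h3', h4'⟩ | ⟨u', v', w', hp', hh'⟩
    · exact cn _ _ _ _ hab h1 h2 h1' h2'
    · have m1 := mixed a b x y _ _ _ h1 h2 h3 hp'
      have m2 := mixed b a x y _ _ _ h2 h1 h4 hp'
      rcases hh' with h | h | h | h
      exacts [m1 (.inl h), m2 (.inl h), m1 (.inr h), m2 (.inr h)]
    · have m1 := mixed a b y x _ _ _ h1' h2' h3' hp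
      have m2 := mixed b a y x _ _ _ h2' h1' h4' hp
      rcases hh with h | h | h | h
      exacts [(m1 (.inl h)).symm, (m2 (.inl h)).symm, (m1 (.inr h)).symm, (m2 (.inr h)).symm]
    · have e1 := pmid _ _ _ hp
      have e2 := pmid _ _ _ hp'
      have e3 := hf _ _ _ hp
      have e4 := hf _ _ _ hp'
      by_cases e : u = u'
      · subst e
        have : v' = v := (hp.2.1 v').1 e2.1
        subst this
        clear * - hh hh' e3
        grind
      · have c := hcol _ _ _ _ _ _ hp hp' e
        have n1 := hnd _ _ _ _ _ _ hp hp' e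
        have n2 := hnd _ _ _ _ _ _ hp' hp (Ne.symm e)
        -- a leaf is not the middle vertex of a pendant path
        have m1 : u ≠ v' := by
          rintro rfl
          exact hp'.1 (((hp.2.1 _).1 e2.2.1).trans ((hp.2.1 _).1 e2.2.2.1).symm)
        have m2 : u' ≠ v := by
          rintro rfl
          exact hp.1 (((hp'.2.1 _).1 e1.2.1).trans ((hp'.2.1 _).1 e1.2.2.1).symm)
        have apart : ∀ c, (c = u ∨ c = v) → (c = u' ∨ c = v') → False := by
          rintro c (rfl | rfl) (h | h)
          exacts [e h, m1 h, m2 h.symm, n1.1 h]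
        have hh1 : (a = u ∨ a = v) ∧ b = f u ∨ (b = u ∨ b = v) ∧ a = f u := by
          clear * - hh
          tauto
        have hh2 : (a = u' ∨ a = v') ∧ b = f u' ∨ (b = u' ∨ b = v') ∧ a = f u' := by
          clear * - hh'
          tauto
        rcases hh1 with ⟨i1, rfl⟩ | ⟨i1, rfl⟩ <;> rcases hh2 with ⟨i2, i3⟩ | ⟨i2, i3⟩
        · exact (apart _ i1 i2).elim
        · exact (c i2 (i3 ▸ i1)).elim
        · exact (c i2 (i3 ▸ i1)).elim
        · exact (apart _ i1 i2).elim
lemma Pend.adj {α : Type*} {G : SimpleGraph α} {u v w : α} (h : Pend G u v w) :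
    G.Adj u v ∧ G.Adj v w :=
  ⟨(h.2.1 v).2 rfl, (h.2.2 w).2 (.inr rfl)⟩

lemma Pend.eq {α : Type*} {G : SimpleGraph α} {u v w v' w' : α} (h : Pend G u v w)
    (h' : Pend G u v' w') : v' = v ∧ w' = w := by
  have e : v' = v := (h.2.1 v').1 h'.adj.1
  subst e
  exact ⟨rfl, ((h.2.2 w').1 h'.adj.2).resolve_left h'.1.symm⟩

/-! ### Trees with few vertices -/

/-- Distinct pendant paths `u - v - w` and `u' - v' - w'` can overlap only in `w = w'`, unless the
tree is the path on three or four vertices. -/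
lemma Pend.disjoint {α : Type*} {G : SimpleGraph α} (hG : G.IsTree)
    (hP3 : ¬ Nonempty (G ≃g SimpleGraph.pathGraph 3))
    (hP4 : ¬ Nonempty (G ≃g SimpleGraph.pathGraph 4)) {u v w u' v' w' : α}
    (h : Pend G u v w) (h' : Pend G u' v' w') (hne : u ≠ u') :
    u ≠ v' ∧ v ≠ u' ∧ v ≠ v' ∧ w ≠ u' ∧ w ≠ v' := by
  have hleaf : ∀ {a b c a' b' c' : α}, Pend G a b c → Pend G a' b' c' → a ≠ b' := by
    rintro a b c a' b' c' h h' rfl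
    exact h'.1 (((h.2.1 _).1 h'.adj.1.symm).trans ((h.2.1 _).1 h'.adj.2).symm)
  have hv : v ≠ v' := by
    rintro rfl
    have e1 : u' = w := ((h.2.2 u').1 h'.adj.1.symm).resolve_left hne.symm
    subst e1
    apply hP3
    have hcl := mem_of_closed hG.connected (fun x => x = u ∨ x = v ∨ x = u') u (.inl rfl) (by
      rintro a b (rfl | rfl | rfl) hab
      · exact .inr (.inl ((h.2.1 b).1 hab))
      · have := (h.2.2 b).1 hab
        tauto
      · exact .inr (.inl ((h'.2.1 b).1 hab)))
    refine iso_of_spanning hG (SimpleGraph.pathGraph_connected 2) ![u, v, u'] ?_ ?_ ?_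
    · have := h.adj.1.ne; have := h.adj.2.ne
      intro i j
      fin_cases i <;> fin_cases j <;> simp <;> grind
    · intro x
      rcases hcl x with rfl | rfl | rfl
      exacts [⟨0, rfl⟩, ⟨1, rfl⟩, ⟨2, rfl⟩]
    · have a1 := h.adj.1; have a2 := h.adj.2
      have := a1.symm; have := a2.symm
      intro i j
      rw [SimpleGraph.pathGraph_adj]
      fin_cases i <;> fin_cases j <;> simp <;> assumption
  refine ⟨hleaf h h', (hleaf h' h).symm, hv, ?_, ?_⟩
  · rintro rfl
    exact hv ((h'.2.1 v).1 h.adj.2.symm)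
  · rintro rfl
    have e1 : v = w' := ((h'.2.2 v).1 h.adj.2.symm).resolve_left (hleaf h' h).symm
    subst e1
    apply hP4
    have hcl := mem_of_closed hG.connected (fun x => x = u ∨ x = v ∨ x = w ∨ x = u') u (.inl rfl)
      (by
        rintro a b (rfl | rfl | rfl | rfl) hab
        · exact .inr (.inl ((h.2.1 b).1 hab))
        · have := (h.2.2 b).1 hab
          tauto
        · have := (h'.2.2 b).1 hab
          tauto
        · exact .inr (.inr (.inl ((h'.2.1 b).1 hab))))
    refine iso_of_spanning hG (SimpleGraph.pathGraph_connected 3) ![u, v, w, u'] ?_ ?_ ?_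
    · have := h.adj.1.ne; have := h.adj.2.ne; have := h'.adj.1.ne; have := h.1; have := h'.1
      intro i j
      fin_cases i <;> fin_cases j <;> simp <;> grind
    · intro x
      rcases hcl x with rfl | rfl | rfl | rfl
      exacts [⟨0, rfl⟩, ⟨1, rfl⟩, ⟨2, rfl⟩, ⟨3, rfl⟩]
    · have a1 := h.adj.1; have a2 := h.adj.2; have a3 := h'.adj.1
      have := a1.symm; have := a2.symm; have := a3.symm
      intro i j
      rw [SimpleGraph.pathGraph_adj]
      fin_cases i <;> fin_cases j <;> simp <;> assumption

/-- An edge that is not the leaf edge of a pendant path has two further vertices adjacent to it,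
unless the tree is a single edge. -/
lemma exists_two_thirds {α : Type*} {G : SimpleGraph α} (hG : G.IsTree)
    (hP2 : ¬ Nonempty (G ≃g SimpleGraph.pathGraph 2)) {u v : α} (huv : G.Adj u v) :
    (∃ w, Pend G u v w) ∨ (∃ w, Pend G v u w) ∨
      ∃ x y, x ≠ y ∧ x ≠ u ∧ x ≠ v ∧ y ≠ u ∧ y ≠ v ∧ (G.Adj u x ∨ G.Adj v x) ∧
        (G.Adj u y ∨ G.Adj v y) := by
  by_cases hx : ∃ x, x ≠ u ∧ x ≠ v ∧ (G.Adj u x ∨ G.Adj v x)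
  · obtain ⟨x, hxu, hxv, hx⟩ := hx
    by_cases hy : ∃ y, x ≠ y ∧ y ≠ u ∧ y ≠ v ∧ (G.Adj u y ∨ G.Adj v y)
    · obtain ⟨y, h1, h2, h3, h4⟩ := hy
      exact .inr (.inr ⟨x, y, h1, hxu, hxv, h2, h3, hx, h4⟩)
    · have hone : ∀ y, y ≠ u → y ≠ v → (G.Adj u y ∨ G.Adj v y) → y = x := by
        intro y h1 h2 h3
        by_contra h
        exact hy ⟨y, Ne.symm h, h1, h2, h3⟩
      have hpend : ∀ a b, G.Adj a b → x ≠ a → G.Adj b x →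
          (∀ y, y ≠ a → y ≠ b → (G.Adj a y ∨ G.Adj b y) → y = x) → Pend G a b x := by
        intro a b hab hxa hbx h
        refine ⟨hxa.symm, fun y => ⟨fun hy => ?_, ?_⟩, fun y => ⟨fun hy => ?_, ?_⟩⟩
        · by_contra hyb
          have e := h y hy.ne' hyb (.inl hy)
          exact triangle_free hG.isAcyclic hab hbx (e ▸ hy)
        · rintro rfl; exact hab
        · by_contra hya
          push Not at hya
          exact hya.2 (h y hya.1 hy.ne' (.inr hy))
        · rintro (rfl | rfl)
          exacts [hab.symm, hbx]
      rcases hx with hx | hx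
      · exact .inr (.inl ⟨x, hpend v u huv.symm hxv hx fun y h1 h2 h3 => hone y h2 h1 h3.symm⟩)
      · exact .inl ⟨x, hpend u v huv hxu hx hone⟩
  · push Not at hx
    refine (hP2 ?_).elim
    have hcl := mem_of_closed hG.connected (fun x => x = u ∨ x = v) u (.inl rfl) (by
      intro a b ha hab
      by_contra hb
      push Not at hb
      have := hx b hb.1 hb.2
      rcases ha with rfl | rfl <;> tauto)
    refine iso_of_spanning hG (SimpleGraph.pathGraph_connected 1) ![u, v] ?_ ?_ ?_
    · have := huv.ne
      intro i j
      fin_cases i <;> fin_cases j <;> simp <;> grind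
    · intro x
      rcases hcl x with rfl | rfl
      exacts [⟨0, rfl⟩, ⟨1, rfl⟩]
    · have := huv.symm
      intro i j
      rw [SimpleGraph.pathGraph_adj]
      fin_cases i <;> fin_cases j <;> simp <;> assumption

/-! ### Choice of the extra vertices -/

/-- With a single pendant path `u - v - w`, the extra vertex can be taken at distance two from `w`
or beyond; otherwise everything else hangs on `w`, and any of at least three further neighbours of
`w` serves, at the price of a dropped path. -/
lemma exists_choice_one {α : Type*} {G : SimpleGraph α} (hG : G.IsTree)
    (hP3 : ¬ Nonempty (G ≃g SimpleGraph.pathGraph 3))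
    (hP4 : ¬ Nonempty (G ≃g SimpleGraph.pathGraph 4))
    (hT7 : ¬ Nonempty (G ≃g treeT7)) {u v w : α} (h : Pend G u v w) :
    ∃ x, x ≠ u ∧ x ≠ v ∧ x ≠ w ∧ (G.Adj w x →
      ∃ p q, p ≠ q ∧ G.Adj w p ∧ G.Adj w q ∧ p ≠ v ∧ q ≠ v ∧ p ≠ x ∧ q ≠ x) := by
  by_contra hcon
  push Not at hcon
  have a1 := h.adj.1; have a2 := h.adj.2
  have b1 := a1.symm; have b2 := a2.symm
  have n1 := a1.ne; have n2 := a2.ne; have n3 := h.1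
  have hL : ∀ x, x ≠ u → x ≠ v → x ≠ w → G.Adj w x := fun x h1 h2 h3 => (hcon x h1 h2 h3).1
  by_cases hx : ∃ x, x ≠ u ∧ x ≠ v ∧ x ≠ w
  · obtain ⟨x, x1, x2, x3⟩ := hx
    have hwx := hL x x1 x2 x3
    have hwx' := hwx.symm
    by_cases hy : ∃ y, y ≠ u ∧ y ≠ v ∧ y ≠ w ∧ y ≠ x
    · obtain ⟨y, y1, y2, y3, y4⟩ := hy
      have hwy := hL y y1 y2 y3
      have hwy' := hwy.symm
      apply hT7
      refine iso_of_spanning hG treeT7_connected ![u, v, w, x, y] ?_ ?_ ?_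
      · clear hcon hL
        intro i j
        fin_cases i <;> fin_cases j <;> simp <;> grind
      · intro z
        by_contra hz
        have z1 : z ≠ u := fun e => hz ⟨0, e.symm⟩
        have z2 : z ≠ v := fun e => hz ⟨1, e.symm⟩
        have z3 : z ≠ w := fun e => hz ⟨2, e.symm⟩
        have z4 : z ≠ x := fun e => hz ⟨3, e.symm⟩
        have z5 : z ≠ y := fun e => hz ⟨4, e.symm⟩
        exact z4 ((hcon x x1 x2 x3).2 y z z5.symm hwy (hL z z1 z2 z3) y2 z2 y4)
      · clear hcon hL
        intro i j
        fin_cases i <;> fin_cases j <;> simp [treeT7] <;> assumption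
    · push Not at hy
      apply hP4
      refine iso_of_spanning hG (SimpleGraph.pathGraph_connected 3) ![u, v, w, x] ?_ ?_ ?_
      · clear hcon hL
        intro i j
        fin_cases i <;> fin_cases j <;> simp <;> grind
      · intro z
        by_contra hz
        exact hz ⟨3, (hy z (fun e => hz ⟨0, e.symm⟩) (fun e => hz ⟨1, e.symm⟩)
          (fun e => hz ⟨2, e.symm⟩)).symm⟩
      · clear hcon hL
        intro i j
        rw [SimpleGraph.pathGraph_adj]
        fin_cases i <;> fin_cases j <;> simp <;> assumption
  · push Not at hx
    apply hP3
    refine iso_of_spanning hG (SimpleGraph.pathGraph_connected 2) ![u, v, w] ?_ ?_ ?_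
    · clear hcon hL
      intro i j
      fin_cases i <;> fin_cases j <;> simp <;> grind
    · intro z
      by_contra hz
      exact hz ⟨2, (hx z (fun e => hz ⟨0, e.symm⟩) (fun e => hz ⟨1, e.symm⟩)).symm⟩
    · clear hcon hL
      intro i j
      rw [SimpleGraph.pathGraph_adj]
      fin_cases i <;> fin_cases j <;> simp <;> assumption

/-- With two pendant paths, one of them admits an extra vertex outside the leaf edge of the other:
either away from its end `w`, or a neighbour of `w`, at the price of a dropped path. -/
lemma exists_choice_two {α : Type*} {G : SimpleGraph α} (hG : G.IsTree)
    (hP3 : ¬ Nonempty (G ≃g SimpleGraph.pathGraph 3))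
    (hP4 : ¬ Nonempty (G ≃g SimpleGraph.pathGraph 4))
    (hP5 : ¬ Nonempty (G ≃g SimpleGraph.pathGraph 5))
    (hP6 : ¬ Nonempty (G ≃g SimpleGraph.pathGraph 6))
    (hT12 : ¬ Nonempty (G ≃g treeT12)) {u v w u' v' w' : α} (h : Pend G u v w)
    (h' : Pend G u' v' w') (hne : u ≠ u') :
    (∃ x, x ≠ u ∧ x ≠ v ∧ x ≠ w ∧ x ≠ u' ∧ x ≠ v' ∧ (G.Adj w x →
      ∃ p q, p ≠ q ∧ G.Adj w p ∧ G.Adj w q ∧ p ≠ v ∧ q ≠ v ∧ p ≠ x ∧ q ≠ x)) ∨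
    (∃ x, x ≠ u' ∧ x ≠ v' ∧ x ≠ w' ∧ x ≠ u ∧ x ≠ v ∧ ¬ G.Adj w' x) := by
  by_contra hcon
  push Not at hcon
  obtain ⟨hc1, hc2⟩ := hcon
  have a1 := h.adj.1; have a2 := h.adj.2
  have a1' := h'.adj.1; have a2' := h'.adj.2
  have b1 := a1.symm; have b2 := a2.symm
  have b1' := a1'.symm; have b2' := a2'.symm
  have n1 := a1.ne; have n2 := a2.ne; have n3 := h.1
  have n1' := a1'.ne; have n2' := a2'.ne; have n3' := h'.1
  obtain ⟨d1, d2, d3, d4, d5⟩ := h.disjoint hG hP3 hP4 h' hne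
  obtain ⟨-, -, -, d4', d5'⟩ := h'.disjoint hG hP3 hP4 h hne.symm
  by_cases hw : w = w'
  · subst hw
    by_cases hx : ∃ x, x ≠ u ∧ x ≠ v ∧ x ≠ w ∧ x ≠ u' ∧ x ≠ v'
    · obtain ⟨x, x1, x2, x3, x4, x5⟩ := hx
      obtain ⟨hwx, hpq⟩ := hc1 x x1 x2 x3 x4 x5
      have hwx' := hwx.symm
      have hcl : ∀ z, z ≠ u → z ≠ v → z ≠ w → z ≠ u' → z ≠ v' → z = x := by
        intro z z1 z2 z3 z4 z5
        exact hpq v' z z5.symm b2' (hc1 z z1 z2 z3 z4 z5).1 d3.symm z2 x5.symm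
      apply hT12
      refine iso_of_spanning hG treeT12_connected ![x, w, v, u, v', u'] ?_ ?_ ?_
      · clear hc1 hc2 hpq hcl
        intro i j
        fin_cases i <;> fin_cases j <;> simp <;> grind
      · intro z
        by_contra hz
        exact hz ⟨0, (hcl z (fun e => hz ⟨3, e.symm⟩) (fun e => hz ⟨2, e.symm⟩)
          (fun e => hz ⟨1, e.symm⟩) (fun e => hz ⟨5, e.symm⟩) (fun e => hz ⟨4, e.symm⟩)).symm⟩
      · clear hc1 hc2 hpq hcl
        intro i j
        fin_cases i <;> fin_cases j <;> simp [treeT12] <;> assumption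
    · push Not at hx
      apply hP5
      refine iso_of_spanning hG (SimpleGraph.pathGraph_connected 4) ![u, v, w, v', u'] ?_ ?_ ?_
      · clear hc1 hc2 hx
        intro i j
        fin_cases i <;> fin_cases j <;> simp <;> grind
      · intro z
        by_contra hz
        exact hz ⟨3, (hx z (fun e => hz ⟨0, e.symm⟩) (fun e => hz ⟨1, e.symm⟩)
          (fun e => hz ⟨2, e.symm⟩) (fun e => hz ⟨4, e.symm⟩)).symm⟩
      · clear hc1 hc2 hx
        intro i j
        rw [SimpleGraph.pathGraph_adj]
        fin_cases i <;> fin_cases j <;> simp <;> assumption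
  · have hww : G.Adj w w' := (hc1 w' d4'.symm.symm d5' (Ne.symm hw) n3'.symm n2'.symm).1
    have hww' := hww.symm
    apply hP6
    refine iso_of_spanning hG (SimpleGraph.pathGraph_connected 5) ![u, v, w, w', v', u'] ?_ ?_ ?_
    · clear hc1 hc2
      intro i j
      fin_cases i <;> fin_cases j <;> simp <;> grind
    · intro z
      by_contra hz
      have z1 : z ≠ u := fun e => hz ⟨0, e.symm⟩
      have z2 : z ≠ v := fun e => hz ⟨1, e.symm⟩
      have z3 : z ≠ w := fun e => hz ⟨2, e.symm⟩
      have z4 : z ≠ w' := fun e => hz ⟨3, e.symm⟩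
      have z5 : z ≠ v' := fun e => hz ⟨4, e.symm⟩
      have z6 : z ≠ u' := fun e => hz ⟨5, e.symm⟩
      exact triangle_free hG.isAcyclic hww (hc2 z z6 z5 z4 z1 z2) (hc1 z z1 z2 z3 z6 z5).1
    · clear hc1 hc2
      intro i j
      rw [SimpleGraph.pathGraph_adj]
      fin_cases i <;> fin_cases j <;> simp <;> assumption

/-- Every tree that is not isomorphic to any of
`P₂, P₃, P₄, P₅, P₆, T7, T12` is an edge intersection hypergraph of a 3-uniform
hypergraph. -/
theorem tree_EI {α : Type*} [Fintype α] [DecidableEq α]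
    (G : SimpleGraph α) (htree : G.IsTree)
    (hP2 : ¬ Nonempty (G ≃g SimpleGraph.pathGraph 2))
    (hP3 : ¬ Nonempty (G ≃g SimpleGraph.pathGraph 3))
    (hP4 : ¬ Nonempty (G ≃g SimpleGraph.pathGraph 4))
    (hP5 : ¬ Nonempty (G ≃g SimpleGraph.pathGraph 5))
    (hP6 : ¬ Nonempty (G ≃g SimpleGraph.pathGraph 6))
    (hT7 : ¬ Nonempty (G ≃g treeT7))
    (hT12 : ¬ Nonempty (G ≃g treeT12)) :
    IsEIofThreeUniform G := by

  classical
  have hdis := fun {u v w u' v' w' : α} (h : Pend G u v w) (h' : Pend G u' v' w') (e : u ≠ u') =>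
    h.disjoint htree hP3 hP4 h' e
  have hmain := fun f => isEI_of_choice htree.isAcyclic f
    (fun u v w u' v' w' h h' e => ⟨(hdis h h' e).2.2.1, (hdis h h' e).2.2.2.2⟩)
    (fun u v huv => exists_two_thirds htree hP2 huv)
  -- a second leaf is never adjacent to the end of a pendant path
  have hfar : ∀ {u v w u' v' w' : α}, Pend G u v w → Pend G u' v' w' → u ≠ u' →
      ¬ G.Adj w u' := fun h h' e hadj => (hdis h h' e).2.2.2.2 ((h'.2.1 _).1 hadj.symm)
  -- with exactly two pendant paths, the first one takes the leaf of the second as its extra vertex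
  have two : ∀ {u₁ v₁ w₁ u₂ v₂ w₂ : α} (x : α), Pend G u₁ v₁ w₁ → Pend G u₂ v₂ w₂ → u₁ ≠ u₂ →
      (∀ u v w, Pend G u v w → u = u₁ ∨ u = u₂) →
      x ≠ u₂ → x ≠ v₂ → x ≠ w₂ → x ≠ u₁ → x ≠ v₁ →
      (G.Adj w₂ x → ∃ p q, p ≠ q ∧ G.Adj w₂ p ∧ G.Adj w₂ q ∧ p ≠ v₂ ∧ q ≠ v₂ ∧ p ≠ x ∧ q ≠ x) →
      IsEIofThreeUniform G := by
    intro u₁ v₁ w₁ u₂ v₂ w₂ x h₁ h₂ hne hall x1 x2 x3 x4 x5 hx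
    have hd := hdis h₁ h₂ hne
    have far := hfar h₁ h₂ hne
    have hcase : ∀ u v w, Pend G u v w →
        (u = u₁ ∧ v = v₁ ∧ w = w₁) ∨ (u = u₂ ∧ v = v₂ ∧ w = w₂) := by
      intro u v w h
      rcases hall _ _ _ h with rfl | rfl
      · exact .inl ⟨rfl, h₁.eq h⟩
      · exact .inr ⟨rfl, h₂.eq h⟩
    obtain ⟨f, f1, f2⟩ : ∃ f : α → α, f u₁ = u₂ ∧ f u₂ = x :=
      ⟨fun z => if z = u₁ then u₂ else x, if_pos rfl, if_neg hne.symm⟩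
    refine hmain f ?_ ?_ ?_ ?_
    · intro u v w h
      rcases hcase _ _ _ h with ⟨rfl, rfl, rfl⟩ | ⟨rfl, rfl, rfl⟩
      · rw [f1]; exact ⟨hne.symm, hd.2.1.symm, hd.2.2.2.1.symm⟩
      · rw [f2]; exact ⟨x1, x2, x3⟩
    · intro u v w u' v' w' h h'
      rcases hcase _ _ _ h with ⟨rfl, rfl, rfl⟩ | ⟨rfl, rfl, rfl⟩ <;>
      rcases hcase _ _ _ h' with ⟨rfl, rfl, rfl⟩ | ⟨rfl, rfl, rfl⟩ <;>
      simp only [f1, f2] <;> tauto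
    · intro u v w h
      rcases hcase _ _ _ h with ⟨rfl, rfl, rfl⟩ | ⟨rfl, rfl, rfl⟩
      · rw [f1]; exact fun h => absurd h far
      · rw [f2]; exact hx
    · intro u v w u' v' w' h h'
      rcases hcase _ _ _ h with ⟨rfl, rfl, rfl⟩ | ⟨rfl, rfl, rfl⟩ <;>
      rcases hcase _ _ _ h' with ⟨rfl, rfl, rfl⟩ | ⟨rfl, rfl, rfl⟩ <;>
      simp only [f1, f2] <;> tauto
  let K : Finset α := Finset.univ.filter fun u => ∃ v w, Pend G u v w
  have hK : ∀ u, u ∈ K ↔ ∃ v w, Pend G u v w := fun u => by simp [K]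
  by_cases h3 : 3 ≤ K.card
  · -- the extra vertex of each leaf is the next leaf in a cyclic order on all of them
    obtain ⟨f, hf, -⟩ := Finset.exists_cycleOn K
    have hfK : ∀ u ∈ K, f u ∈ K := fun u hu => hf.apply_mem_iff.2 hu
    have hf1 : ∀ u ∈ K, f u ≠ u := by
      intro u hu e
      have := Nat.le_of_dvd one_pos ((hf.pow_apply_eq hu (n := 1)).1 (by simpa using e))
      omega
    have hf2 : ∀ u ∈ K, f (f u) ≠ u := by
      intro u hu e
      have := Nat.le_of_dvd two_pos ((hf.pow_apply_eq hu (n := 2)).1 (by simpa [pow_two] using e))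
      omega
    have hnx : ∀ u v w, Pend G u v w → f u ≠ u ∧ ∃ v' w', Pend G (f u) v' w' := fun u v w h =>
      have hu := (hK u).2 ⟨v, w, h⟩
      ⟨hf1 u hu, (hK _).1 (hfK u hu)⟩
    have hnadj : ∀ u v w, Pend G u v w → ¬ G.Adj w (f u) := by
      intro u v w h
      obtain ⟨e, v', w', h'⟩ := hnx u v w h
      exact hfar h h' e.symm
    refine hmain f ?_ ?_ ?_ ?_
    · intro u v w h
      obtain ⟨e, v', w', h'⟩ := hnx u v w h
      have := hdis h h' e.symm
      exact ⟨e, this.2.1.symm, this.2.2.2.1.symm⟩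
    · exact fun u v w _ _ _ h _ ha => absurd ha (hnadj u v w h)
    · exact fun u v w h ha => absurd ha (hnadj u v w h)
    · intro u v w u' v' w' h h' e hc hc'
      have hleaf : ∀ {a b c a' b' c' : α}, Pend G a b c → Pend G a' b' c' → f a = b' → False := by
        intro a b c a' b' c' h h' hb
        obtain ⟨-, p, q, hp⟩ := hnx a b c h
        by_cases e : f a = a'
        · exact h'.adj.1.ne (e.symm.trans hb)
        · exact (hdis hp h' e).1 hb
      have e1 := hc.resolve_right (hleaf h h')
      have e2 := hc'.resolve_right (hleaf h' h)
      exact hf2 u ((hK u).2 ⟨v, w, h⟩) (by rw [e1, e2])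
  · by_cases hex : ∃ u v w, Pend G u v w
    · obtain ⟨u, v, w, h⟩ := hex
      by_cases hex' : ∃ u' v' w', Pend G u' v' w' ∧ u ≠ u'
      · obtain ⟨u', v', w', h', hne⟩ := hex'
        have hall : ∀ a b c, Pend G a b c → a = u ∨ a = u' := by
          intro a b c ha
          by_contra hn
          push Not at hn
          apply h3
          rw [← Finset.card_eq_three.2 ⟨u, u', a, hne, hn.1.symm, hn.2.symm, rfl⟩]
          apply Finset.card_le_card
          intro z hz
          simp only [Finset.mem_insert, Finset.mem_singleton] at hz
          rcases hz with rfl | rfl | rfl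
          exacts [(hK _).2 ⟨_, _, h⟩, (hK _).2 ⟨_, _, h'⟩, (hK _).2 ⟨_, _, ha⟩]
        rcases exists_choice_two htree hP3 hP4 hP5 hP6 hT12 h h' hne with
          ⟨x, x1, x2, x3, x4, x5, hx⟩ | ⟨x, x1, x2, x3, x4, x5, hx⟩
        · exact two x h' h hne.symm (fun a b c ha => (hall a b c ha).symm) x1 x2 x3 x4 x5 hx
        · exact two x h h' hne hall x1 x2 x3 x4 x5 (fun ha => absurd ha hx)
      · obtain ⟨x, x1, x2, x3, hx⟩ := exists_choice_one htree hP3 hP4 hT7 h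
        have hcase : ∀ a b c, Pend G a b c → a = u ∧ b = v ∧ c = w := by
          intro a b c ha
          have e : u = a := by
            by_contra e
            exact hex' ⟨a, b, c, ha, e⟩
          subst e
          exact ⟨rfl, h.eq ha⟩
        refine hmain (fun _ => x) ?_ ?_ ?_ ?_
        · rintro a b c ha
          obtain ⟨rfl, rfl, rfl⟩ := hcase _ _ _ ha
          exact ⟨x1, x2, x3⟩
        · intro a b c a' b' c' ha ha' _ _
          exact (hcase _ _ _ ha).1.trans (hcase _ _ _ ha').1.symm
        · rintro a b c ha
          obtain ⟨rfl, rfl, rfl⟩ := hcase _ _ _ ha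
          exact hx
        · intro a b c a' b' c' ha ha' e
          exact absurd ((hcase _ _ _ ha).1.trans (hcase _ _ _ ha').1.symm) e
    · have hno : ∀ u v w, ¬ Pend G u v w := fun u v w h => hex ⟨u, v, w, h⟩
      exact hmain id (fun u v w h => absurd h (hno u v w))
        (fun u v w _ _ _ h => absurd h (hno u v w)) (fun u v w h => absurd h (hno u v w))
        (fun u v w _ _ _ h => absurd h (hno u v w))
end

section
/- For every n ≥ 5, the cycle C_n is an edge intersection hypergraph of a 3-uniform hypergraph. -/
/-- The triple of consecutive elements starting at `i`. -/
def consecutiveTriple {R : Type*} [CommRing R] [DecidableEq R] (i : R) : Finset R :=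
  {i, i + 1, i + 2}

section

variable {R : Type*} [CommRing R] [DecidableEq R]

lemma mem_consecutiveTriple {i x : R} :
    x ∈ consecutiveTriple i ↔ x = i ∨ x = i + 1 ∨ x = i + 2 := by
  simp [consecutiveTriple]

lemma card_consecutiveTriple (h1 : (1 : R) ≠ 0) (h2 : (2 : R) ≠ 0) (i : R) :
    (consecutiveTriple i).card = 3 := by
  refine Finset.card_eq_three.2 ⟨i, i + 1, i + 2, ?_, ?_, ?_, rfl⟩
  · exact fun h => h1 (by linear_combination -h)
  · exact fun h => h2 (by linear_combination -h)
  · exact fun h => h1 (by linear_combination -h)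

lemma consecutiveTriple_inter_succ (h1 : (1 : R) ≠ 0) (h2 : (2 : R) ≠ 0) (h3 : (3 : R) ≠ 0)
    (i : R) : consecutiveTriple i ∩ consecutiveTriple (i + 1) = {i + 1, i + 2} := by
  ext x
  simp only [Finset.mem_inter, mem_consecutiveTriple, Finset.mem_insert, Finset.mem_singleton]
  constructor
  · rintro ⟨h | h, k | k | k⟩
    · exact (h1 (by linear_combination h - k)).elim
    · exact (h2 (by linear_combination h - k)).elim
    · exact (h3 (by linear_combination h - k)).elim
    all_goals exact h
  · rintro (rfl | rfl) <;> grind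

/-- Two elements shared by distinct consecutive triples differ by `±1`. Unequal differences of
offsets cannot agree: `±2 = ∓1` would give `3 = 0`, and `2 = -2` would give `4 = 0`. -/
lemma sub_eq_one_of_mem_consecutiveTriple
    (h3 : (3 : R) ≠ 0) (h4 : (4 : R) ≠ 0) {i j a b : R} (hij : i ≠ j) (hab : a ≠ b)
    (hai : a ∈ consecutiveTriple i) (haj : a ∈ consecutiveTriple j)
    (hbi : b ∈ consecutiveTriple i) (hbj : b ∈ consecutiveTriple j) :
    a - b = 1 ∨ b - a = 1 := by
  rw [mem_consecutiveTriple] at *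
  grind

/-- The pairwise intersections of consecutive triples are exactly the pairs of elements
differing by `±1`. -/
lemma EIedges_range_consecutiveTriple (h1 : (1 : R) ≠ 0) (h2 : (2 : R) ≠ 0)
    (h3 : (3 : R) ≠ 0) (h4 : (4 : R) ≠ 0) :
    EIedges (Set.range (consecutiveTriple (R := R))) =
      {s | ∃ u v : R, (u - v = 1 ∨ v - u = 1) ∧ s = {u, v}} := by
  ext s
  constructor
  · rintro ⟨_, ⟨i, rfl⟩, _, ⟨j, rfl⟩, hne, hcard, rfl⟩
    obtain ⟨a, ha, b, hb, hab⟩ := Finset.one_lt_card.1 hcard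
    have ha' := Finset.mem_inter.1 ha
    have hb' := Finset.mem_inter.1 hb
    refine ⟨a, b, sub_eq_one_of_mem_consecutiveTriple h3 h4 (ne_of_apply_ne _ hne) hab
      ha'.1 ha'.2 hb'.1 hb'.2, ?_⟩
    symm
    apply Finset.eq_of_subset_of_card_le
    · simp [Finset.insert_subset_iff, ha, hb]
    · rw [Finset.card_pair hab]
      by_contra! hc
      -- An intersection of size `3` would force the two triples to coincide.
      have hi := Finset.eq_of_subset_of_card_le
        (Finset.inter_subset_left (s₁ := consecutiveTriple i) (s₂ := consecutiveTriple j))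
        (by rw [card_consecutiveTriple h1 h2]; exact hc)
      have hj := Finset.eq_of_subset_of_card_le
        (Finset.inter_subset_right (s₁ := consecutiveTriple i) (s₂ := consecutiveTriple j))
        (by rw [card_consecutiveTriple h1 h2]; exact hc)
      exact hne (hi.symm.trans hj)
  · have key (i : R) :
        ({i + 1, i + 2} : Finset R) ∈ EIedges (Set.range (consecutiveTriple (R := R))) := by
      refine ⟨_, ⟨i, rfl⟩, _, ⟨i + 1, rfl⟩, fun h => ?_, ?_,
        (consecutiveTriple_inter_succ h1 h2 h3 i).symm⟩
      · have hi : i ∈ consecutiveTriple (i + 1) := h ▸ mem_consecutiveTriple.2 (Or.inl rfl)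
        rcases mem_consecutiveTriple.1 hi with hi | hi | hi
        · exact h1 (by linear_combination -hi)
        · exact h2 (by linear_combination -hi)
        · exact h3 (by linear_combination -hi)
      · rw [consecutiveTriple_inter_succ h1 h2 h3, Finset.card_pair fun h => h1 (by linear_combination -h)]
    rintro ⟨u, v, h | h, rfl⟩
    · rw [Finset.pair_comm]
      convert key (v - 1) using 3 <;> grind
    · convert key (u - 1) using 3 <;> grind

end

/-- For every `n ≥ 5`, the cycle `C_n` is an edge intersection
hypergraph of a 3-uniform hypergraph. -/
theorem cycle_EI (n : ℕ) (hn : 5 ≤ n) :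
    IsEIofThreeUniform (SimpleGraph.cycleGraph n) := by
  obtain ⟨m, rfl⟩ := Nat.exists_eq_add_of_le' hn
  have hz (k : ℕ) (hk : 0 < k) (hk' : k < m + 5) : ((k : ℕ) : ZMod (m + 5)) ≠ 0 := by
    rw [Ne, ZMod.natCast_eq_zero_iff]
    exact Nat.not_dvd_of_pos_of_lt hk hk'
  have h1 : (1 : ZMod (m + 5)) ≠ 0 := mod_cast hz 1 (by omega) (by omega)
  have h2 : (2 : ZMod (m + 5)) ≠ 0 := mod_cast hz 2 (by omega) (by omega)
  have h3 : (3 : ZMod (m + 5)) ≠ 0 := mod_cast hz 3 (by omega) (by omega)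
  have h4 : (4 : ZMod (m + 5)) ≠ 0 := mod_cast hz 4 (by omega) (by omega)
  -- `ZMod (m + 5)` is by definition `Fin (m + 5)`, the vertex type of the cycle.
  refine ⟨Set.range (consecutiveTriple (R := ZMod (m + 5))), ?_, ?_⟩
  · rintro _ ⟨i, rfl⟩
    exact card_consecutiveTriple h1 h2 i
  · have hG : edgeFinsets (SimpleGraph.cycleGraph (m + 5)) =
        {s | ∃ u v : Fin (m + 5), (u - v = 1 ∨ v - u = 1) ∧ s = {u, v}} := by
      simp only [edgeFinsets, SimpleGraph.cycleGraph_adj]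
    rw [hG]
    exact EIedges_range_consecutiveTriple (R := ZMod (m + 5)) h1 h2 h3 h4
end

section
/- Let G₁ = (V₁, E₁) be the edge intersection hypergraph of a 3-uniform hypergraph H₁ = (V₁, ℰ₁), let v₁ ∈ V₁ have two distinct neighbors u, w in G₁, and let v₂ ∉ V₁ be a new vertex. Then for the 3-uniform hypergraph H = (V₁ ∪ {v₂}, ℰ₁ ∪ {{u, v₁, v₂}, {w, v₁, v₂}}) one has EI(H) = G₁ ⊕ P₂, i.e. the edge set of EI(H) equals E₁ ∪ {{v₁, v₂}} (the graph G₁ with the pendant edge {v₁, v₂} attached). -/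
theorem ne_and_mem_of_pair_mem_EIedges {α : Type*} [DecidableEq α] {V : Finset α}
    {ℰ : Set (Finset α)} (hV : ∀ e ∈ ℰ, e ⊆ V) {x v : α}
    (h : ({x, v} : Finset α) ∈ EIedges ℰ) : x ≠ v ∧ x ∈ V := by
  obtain ⟨e₁, he₁, e₂, -, -, hcard, heq⟩ := h
  rw [← heq] at hcard
  refine ⟨?_, ?_⟩
  · rintro rfl
    simp at hcard
  · have hx : x ∈ e₁ ∩ e₂ := heq ▸ Finset.mem_insert_self x {v}
    exact hV e₁ he₁ (Finset.mem_inter.mp hx).1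

theorem inter_triple_eq_pair {α : Type*} [DecidableEq α] {e : Finset α} {x v z : α}
    (hz : z ∉ e) (hcard : 2 ≤ (e ∩ {x, v, z}).card) :
    e ∩ {x, v, z} = {x, v} := by
  apply Finset.eq_of_subset_of_card_le
  · intro a ha
    simp only [Finset.mem_inter, Finset.mem_insert, Finset.mem_singleton] at ha ⊢
    grind
  · exact Finset.card_le_two.trans hcard

/-- Let `G₁ = (V₁, E₁)` be the edge intersection hypergraph of a 3-uniform
hypergraph `H₁ = (V₁, ℰ₁)`, let `v₁ ∈ V₁` have two distinct neighbors `u, w` in `G₁`, and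
let `v₂ ∉ V₁` be a new vertex.  Then for the 3-uniform hypergraph
`H = (V₁ ∪ {v₂}, ℰ₁ ∪ {{u, v₁, v₂}, {w, v₁, v₂}})` one has `EI(H) = G₁ ⊕ P₂`, i.e. the
edge set of `EI(H)` equals `E₁ ∪ {{v₁, v₂}}`. -/
theorem EI_pendant_edge {α : Type*} [DecidableEq α]
    (V₁ : Finset α) (E₁ ℰ₁ : Set (Finset α))
    (huniform : ∀ e ∈ ℰ₁, e.card = 3 ∧ e ⊆ V₁)
    (hEI : EIedges ℰ₁ = E₁)
    (v₁ u w : α) (hv₁ : v₁ ∈ V₁) (huw : u ≠ w)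
    (hu : ({u, v₁} : Finset α) ∈ E₁) (hw : ({w, v₁} : Finset α) ∈ E₁)
    (v₂ : α) (hv₂ : v₂ ∉ V₁) :
    EIedges (ℰ₁ ∪ {({u, v₁, v₂} : Finset α), ({w, v₁, v₂} : Finset α)})
      = E₁ ∪ {({v₁, v₂} : Finset α)} := by
  have hV : ∀ e ∈ ℰ₁, e ⊆ V₁ := fun e he => (huniform e he).2
  have hz : ∀ e ∈ ℰ₁, v₂ ∉ e := fun e he h => hv₂ (hV e he h)
  subst hEI
  obtain ⟨huv, huV⟩ := ne_and_mem_of_pair_mem_EIedges hV hu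
  obtain ⟨hwv, hwV⟩ := ne_and_mem_of_pair_mem_EIedges hV hw
  have huv₂ : u ≠ v₂ := fun h => hv₂ (h ▸ huV)
  have hwv₂ : w ≠ v₂ := fun h => hv₂ (h ▸ hwV)
  have hvv₂ : v₁ ≠ v₂ := fun h => hv₂ (h ▸ hv₁)
  have hinter : ({u, v₁, v₂} : Finset α) ∩ {w, v₁, v₂} = {v₁, v₂} := by
    ext a
    simp only [Finset.mem_inter, Finset.mem_insert, Finset.mem_singleton]
    grind
  have hold : ∀ e ∈ ℰ₁, ∀ f ∈ ({{u, v₁, v₂}, {w, v₁, v₂}} : Set (Finset α)),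
      2 ≤ (e ∩ f).card → e ∩ f ∈ EIedges ℰ₁ := by
    rintro e he f (rfl | rfl) hcard
    · rwa [inter_triple_eq_pair (hz e he) hcard]
    · rwa [inter_triple_eq_pair (hz e he) hcard]
  ext s
  constructor
  · rintro ⟨e₁, he₁ | he₁, e₂, he₂ | he₂, hne, hcard, rfl⟩
    · exact Or.inl ⟨e₁, he₁, e₂, he₂, hne, hcard, rfl⟩
    · exact Or.inl (hold e₁ he₁ e₂ he₂ hcard)
    · rw [Finset.inter_comm] at hcard ⊢
      exact Or.inl (hold e₂ he₂ e₁ he₁ hcard)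
    · right
      rcases he₁ with rfl | rfl <;> rcases he₂ with rfl | rfl
      · exact absurd rfl hne
      · exact hinter
      · rw [Finset.inter_comm]
        exact hinter
      · exact absurd rfl hne
  · rintro (⟨e₁, he₁, e₂, he₂, hne, hcard, rfl⟩ | rfl)
    · exact ⟨e₁, Or.inl he₁, e₂, Or.inl he₂, hne, hcard, rfl⟩
    · refine ⟨{u, v₁, v₂}, Or.inr (Or.inl rfl), {w, v₁, v₂}, Or.inr (Or.inr rfl), ?_, ?_,
        hinter.symm⟩
      · intro h
        have hmem : u ∈ ({w, v₁, v₂} : Finset α) := h ▸ Finset.mem_insert_self u _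
        simp [huw, huv, huv₂] at hmem
      · rw [hinter, Finset.card_pair hvv₂]
end

section
/- Let 3 ≤ n ≤ 6, let G₁ = (V₁, E₁) be the edge intersection hypergraph of a 3-uniform hypergraph H₁ = (V₁, ℰ₁), let v₁ ∈ V₁, let u ∈ V₁ be a neighbor of v₁ in G₁, let w ∈ V₁ \ {v₁, u}, and let v₂, …, v_n be distinct new vertices not in V₁. Then for the 3-uniform hypergraph H = (V₁ ∪ {v₂, …, v_n}, ℰ₁ ∪ {{u, v₁, v₂}, {v₁, v₂, v₃}, {v₂, v₃, v₄}, …, {v_{n−2}, v_{n−1}, v_n}, {w, v_{n−1}, v_n}}) one has EI(H) = G₁ ⊕ P_n, i.e. the edge set of EI(H) equals E₁ ∪ {{v₁, v₂}, {v₂, v₃}, …, {v_{n−1}, v_n}} (the graph G₁ with the path v₁v₂…v_n attached at its end vertex v₁). -/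
/-- The `i`-th window `{xᵢ, xᵢ₊₁, xᵢ₊₂}` of the sequence `x`, written as the image of an interval so
that intersections of windows can be read off from intersections of intervals. -/
def window {α : Type*} [DecidableEq α] (x : ℕ → α) (i : ℕ) : Finset α :=
  (Finset.Icc i (i + 2)).image x

theorem window_eq {α : Type*} [DecidableEq α] (x : ℕ → α) (i : ℕ) :
    window x i = {x i, x (i + 1), x (i + 2)} := by
  have h : Finset.Icc i (i + 2) = {i, i + 1, i + 2} := by
    ext k
    simp only [Finset.mem_Icc, Finset.mem_insert, Finset.mem_singleton]
    omega
  simp [window, h]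

theorem window_inter {α : Type*} [DecidableEq α] {x : ℕ → α} {n i j : ℕ}
    (hx : Set.InjOn x (Set.Iic (n + 1))) (hij : i ≤ j) (hj : j < n) :
    window x i ∩ window x j = (Finset.Icc j (i + 2)).image x := by
  have h : Finset.Icc i (i + 2) ∩ Finset.Icc j (j + 2) = Finset.Icc j (i + 2) := by
    ext k
    simp only [Finset.mem_Icc, Finset.mem_inter]
    omega
  rw [window, window, ← h]
  refine (Finset.image_inter_of_injOn _ _ (hx.mono fun k hk => ?_)).symm
  simp only [Set.mem_union, Finset.mem_coe, Finset.mem_Icc, Set.mem_Iic] at hk ⊢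
  omega

theorem window_inter_succ {α : Type*} [DecidableEq α] {x : ℕ → α} {n i : ℕ}
    (hx : Set.InjOn x (Set.Iic (n + 1))) (hi : i + 1 < n) :
    window x i ∩ window x (i + 1) = {x (i + 1), x (i + 2)} := by
  have h : Finset.Icc (i + 1) (i + 2) = {i + 1, i + 2} := by
    ext k
    simp only [Finset.mem_Icc, Finset.mem_insert, Finset.mem_singleton]
    omega
  simp [window_inter hx (Nat.le_succ i) hi, h]

theorem eq_succ_of_two_le_card_window_inter {α : Type*} [DecidableEq α] {x : ℕ → α} {n i j : ℕ}
    (hx : Set.InjOn x (Set.Iic (n + 1))) (hij : i < j) (hj : j < n)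
    (hc : 2 ≤ (window x i ∩ window x j).card) : j = i + 1 := by
  rw [window_inter hx hij.le hj] at hc
  have h := hc.trans Finset.card_image_le
  rw [Nat.card_Icc] at h
  omega

/-- The edge intersection hypergraph of the `n` windows of a sequence of `n + 2` distinct vertices
is the path on the sequence without its two end terms. -/
theorem EIedges_windows {α : Type*} [DecidableEq α] {x : ℕ → α} {n : ℕ}
    (hx : Set.InjOn x (Set.Iic (n + 1))) :
    EIedges {e | ∃ i < n, e = window x i}
      = {e | ∃ i, i + 1 < n ∧ e = {x (i + 1), x (i + 2)}} := by
  ext s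
  constructor
  · rintro ⟨_, ⟨i, hi, rfl⟩, _, ⟨j, hj, rfl⟩, hne, hc, rfl⟩
    rcases lt_trichotomy i j with h | rfl | h
    · obtain rfl := eq_succ_of_two_le_card_window_inter hx h hj hc
      exact ⟨i, hj, window_inter_succ hx hj⟩
    · exact absurd rfl hne
    · rw [Finset.inter_comm] at hc ⊢
      obtain rfl := eq_succ_of_two_le_card_window_inter hx h hi hc
      exact ⟨j, hi, window_inter_succ hx hi⟩
  · rintro ⟨i, hi, rfl⟩
    have hmem {a b : ℕ} (ha : a ≤ n + 1) (hb : b ≤ n + 1) (h : x a = x b) : a = b := hx ha hb h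
    refine ⟨_, ⟨i, by omega, rfl⟩, _, ⟨i + 1, hi, rfl⟩, fun h => ?_, ?_,
      (window_inter_succ hx hi).symm⟩
    · have h0 : x i ∈ window x (i + 1) := h ▸ by simp [window_eq]
      obtain ⟨k, hk, hki⟩ := Finset.mem_image.1 h0
      rw [Finset.mem_Icc] at hk
      have := hmem (by omega) (by omega) hki
      omega
    · rw [window_inter_succ hx hi, Finset.card_pair]
      intro h
      have := hmem (by omega) (by omega) h
      omega

/-- A set `e` of old vertices meets a window in two or more vertices only if the window is the
first one and the intersection is `{x₀, x₁}`. -/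
theorem inter_window_of_subset {α : Type*} [DecidableEq α] {x : ℕ → α} {n i : ℕ} {V e : Finset α}
    (hn : 3 ≤ n) (hV : ∀ k, 2 ≤ k → k ≤ n → x k ∉ V) (he : e ⊆ V) (hi : i < n)
    (hc : 2 ≤ (e ∩ window x i).card) : e ∩ window x i = {x 0, x 1} := by
  have key {a : α} (ha : a ∈ e ∩ window x i) :
      ∃ k, i ≤ k ∧ k ≤ i + 2 ∧ (k ≤ 1 ∨ k = n + 1) ∧ x k = a := by
    obtain ⟨hae, hw⟩ := Finset.mem_inter.1 ha
    obtain ⟨k, hk, rfl⟩ := Finset.mem_image.1 hw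
    rw [Finset.mem_Icc] at hk
    refine ⟨k, hk.1, hk.2, ?_, rfl⟩
    by_contra! h
    exact hV k (by omega) (by omega) (he hae)
  obtain rfl : i = 0 := by
    obtain ⟨a, ha, b, hb, hab⟩ := Finset.one_lt_card.1 hc
    obtain ⟨k, hk1, hk2, hk3, rfl⟩ := key ha
    obtain ⟨l, hl1, hl2, hl3, rfl⟩ := key hb
    have : k ≠ l := fun h => hab (h ▸ rfl)
    omega
  refine Finset.eq_of_subset_of_card_le (fun a ha => ?_) (Finset.card_le_two.trans hc)
  obtain ⟨k, hk1, hk2, hk3, rfl⟩ := key ha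
  obtain rfl | rfl : k = 0 ∨ k = 1 := by omega
  all_goals simp

/-- Adding hyperedges whose large intersections with the old ones are edges of the old edge
intersection hypergraph only adds the edges created among the new hyperedges. -/
theorem EIedges_union {α : Type*} [DecidableEq α] {A B : Set (Finset α)}
    (h : ∀ a ∈ A, ∀ b ∈ B, 2 ≤ (a ∩ b).card → a ∩ b ∈ EIedges A) :
    EIedges (A ∪ B) = EIedges A ∪ EIedges B := by
  ext s
  constructor
  · rintro ⟨e, he | he, f, hf | hf, hne, hc, rfl⟩
    · exact .inl ⟨e, he, f, hf, hne, hc, rfl⟩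
    · exact .inl (h e he f hf hc)
    · rw [Finset.inter_comm] at hc ⊢
      exact .inl (h f hf e he hc)
    · exact .inr ⟨e, he, f, hf, hne, hc, rfl⟩
  · rintro (⟨e, he, f, hf, h'⟩ | ⟨e, he, f, hf, h'⟩)
    · exact ⟨e, .inl he, f, .inl hf, h'⟩
    · exact ⟨e, .inr he, f, .inr hf, h'⟩

/-- Let `3 ≤ n ≤ 6`, let `G₁ = (V₁, E₁)` be the edge intersection
hypergraph of a 3-uniform hypergraph `H₁ = (V₁, ℰ₁)`, let `v₁ ∈ V₁`, let `u ∈ V₁` be a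
neighbor of `v₁` in `G₁`, let `w ∈ V₁ \ {v₁, u}`, and let `v₂, …, v_n` be distinct new
vertices not in `V₁`.  Then for the 3-uniform hypergraph
`H = (V₁ ∪ {v₂, …, v_n}, ℰ₁ ∪ {{u,v₁,v₂}, {v₁,v₂,v₃}, {v₂,v₃,v₄}, …, {v_{n−2},v_{n−1},v_n},
{w,v_{n−1},v_n}})` one has `EI(H) = G₁ ⊕ P_n`, i.e. the edge set of `EI(H)` equals
`E₁ ∪ {{v₁,v₂}, {v₂,v₃}, …, {v_{n−1},v_n}}`.
(Here the path vertices `v₁, …, v_n` are written 0-indexed as `v 0, …, v (n-1)`.) -/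
theorem EI_pendant_path {α : Type*} [DecidableEq α] (n : ℕ) (hn3 : 3 ≤ n) (hn6 : n ≤ 6)
    (V₁ : Finset α) (E₁ ℰ₁ : Set (Finset α))
    (huniform : ∀ e ∈ ℰ₁, e.card = 3 ∧ e ⊆ V₁)
    (hEI : EIedges ℰ₁ = E₁)
    (v : ℕ → α) (hv₁ : v 0 ∈ V₁)
    (u w : α) (hu : ({u, v 0} : Finset α) ∈ E₁)
    (hw : w ∈ V₁) (hwv : w ≠ v 0) (hwu : w ≠ u)
    (hnew : ∀ i, 1 ≤ i → i < n → v i ∉ V₁)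
    (hinj : ∀ i < n, ∀ j < n, v i = v j → i = j) :
    EIedges (ℰ₁ ∪ {({u, v 0, v 1} : Finset α)}
        ∪ {e : Finset α | ∃ i, i + 2 < n ∧ e = {v i, v (i + 1), v (i + 2)}}
        ∪ {({w, v (n - 2), v (n - 1)} : Finset α)})
      = E₁ ∪ {e : Finset α | ∃ i, i + 1 < n ∧ e = {v i, v (i + 1)}} := by
  subst hEI
  have hu2 : 2 ≤ ({u, v 0} : Finset α).card := by
    obtain ⟨_, _, _, _, _, hc, hs⟩ := hu
    rwa [hs]
  have huv : u ≠ v 0 := by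
    intro h
    simp [h] at hu2
  have huV : u ∈ V₁ := by
    obtain ⟨e, he, f, _, _, _, hs⟩ := hu
    have h : u ∈ e ∩ f := hs ▸ by simp
    exact (huniform e he).2 (Finset.mem_inter.1 h).1
  have hnew_ne {a : α} (ha : a ∈ V₁) (hav : a ≠ v 0) (i : ℕ) (hi : i < n) : v i ≠ a := by
    rcases Nat.eq_zero_or_pos i with rfl | h
    · exact hav.symm
    · exact fun h' => hnew i h hi (h' ▸ ha)
  let x : ℕ → α := fun i => if i = 0 then u else if i = n + 1 then w else v (i - 1)
  have x0 : x 0 = u := rfl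
  have xw : x (n + 1) = w := by simp [x]
  have xv (i : ℕ) (hi : i < n) : x (i + 1) = v i := by simp [x, hi.ne]
  have hx : Set.InjOn x (Set.Iic (n + 1)) := by
    have cases_of {i : ℕ} (hi : i ∈ Set.Iic (n + 1)) :
        i = 0 ∨ i = n + 1 ∨ ∃ k < n, i = k + 1 := by
      rw [Set.mem_Iic] at hi
      rcases i with _ | k
      · exact .inl rfl
      · rcases eq_or_ne k n with rfl | hk
        · exact .inr (.inl rfl)
        · exact .inr (.inr ⟨k, by omega, rfl⟩)
    intro i hi j hj hij
    rcases cases_of hi with rfl | rfl | ⟨k, hk, rfl⟩ <;>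
      rcases cases_of hj with rfl | rfl | ⟨l, hl, rfl⟩
    · rfl
    · rw [x0, xw] at hij
      exact absurd hij.symm hwu
    · rw [x0, xv l hl] at hij
      exact absurd hij.symm (hnew_ne huV huv l hl)
    · rw [x0, xw] at hij
      exact absurd hij hwu
    · rfl
    · rw [xw, xv l hl] at hij
      exact absurd hij.symm (hnew_ne hw hwv l hl)
    · rw [x0, xv k hk] at hij
      exact absurd hij (hnew_ne huV huv k hk)
    · rw [xw, xv k hk] at hij
      exact absurd hij (hnew_ne hw hwv k hk)
    · rw [xv k hk, xv l hl] at hij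
      rw [hinj k hk l hl hij]
  have hfirst : window x 0 = {u, v 0, v 1} := by
    rw [window_eq, x0, xv 0 (by omega), xv 1 (by omega)]
  have hmid (i : ℕ) (hi : i + 2 < n) : window x (i + 1) = {v i, v (i + 1), v (i + 2)} := by
    rw [window_eq, xv i (by omega), xv (i + 1) (by omega), xv (i + 2) hi]
  have hlast : window x (n - 1) = {w, v (n - 2), v (n - 1)} := by
    obtain ⟨m, rfl⟩ : ∃ m, n = m + 2 := ⟨n - 2, by omega⟩
    change window x (m + 1) = {w, v m, v (m + 1)}
    rw [window_eq, xv m (by omega), xv (m + 1) (by omega), xw]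
    ext a
    simp only [Finset.mem_insert, Finset.mem_singleton]
    tauto
  have hwin : {({u, v 0, v 1} : Finset α)}
        ∪ {e : Finset α | ∃ i, i + 2 < n ∧ e = {v i, v (i + 1), v (i + 2)}}
        ∪ {({w, v (n - 2), v (n - 1)} : Finset α)} = {e | ∃ i < n, e = window x i} := by
    ext e
    constructor
    · rintro ((rfl | ⟨i, hi, rfl⟩) | rfl)
      · exact ⟨0, by omega, hfirst.symm⟩
      · exact ⟨i + 1, by omega, (hmid i hi).symm⟩
      · exact ⟨n - 1, by omega, hlast.symm⟩
    · rintro ⟨i, hi, rfl⟩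
      rcases Nat.eq_zero_or_pos i with rfl | h0
      · exact .inl (.inl hfirst)
      · rcases eq_or_ne i (n - 1) with rfl | h1
        · exact .inr hlast
        · obtain ⟨k, rfl⟩ : ∃ k, i = k + 1 := ⟨i - 1, by omega⟩
          exact .inl (.inr ⟨k, by omega, hmid k (by omega)⟩)
  rw [Set.union_assoc, Set.union_assoc, ← Set.union_assoc {_}, hwin, EIedges_union,
    EIedges_windows hx]
  · congr 1
    ext e
    refine exists_congr fun i => and_congr_right fun hi => ?_
    rw [xv i (by omega), xv (i + 1) hi]
  · rintro e he _ ⟨i, hi, rfl⟩ hc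
    have hV (k : ℕ) (hk : 2 ≤ k) (hkn : k ≤ n) : x k ∉ V₁ := by
      obtain ⟨l, rfl⟩ : ∃ l, k = l + 1 := ⟨k - 1, by omega⟩
      rw [xv l (by omega)]
      exact hnew l (by omega) (by omega)
    rw [inter_window_of_subset hn3 hV (huniform e he).2 hi hc, x0, xv 0 (by omega)]
    exact hu
end

section
/- Let G₁ = (V₁, E₁) be the edge intersection hypergraph of a 3-uniform hypergraph H₁ = (V₁, ℰ₁), let v₁ ∈ V₁, let u ∈ V₁ be a neighbor of v₁ in G₁, let x ∈ V₁ \ {v₁, u}, and let v₂, v₃ be distinct new vertices not in V₁. Then for the 3-uniform hypergraph H = (V₁ ∪ {v₂, v₃}, ℰ₁ ∪ {{v₁, v₂, v₃}, {u, v₁, v₂}, {u, v₁, v₃}, {x, v₂, v₃}}) one has EI(H) = G₁ ⊕ C₃, i.e. the edge set of EI(H) equals E₁ ∪ {{v₁, v₂}, {v₂, v₃}, {v₃, v₁}} (the graph G₁ with a triangle v₁v₂v₃ attached at v₁). -/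
/-- Let `G₁ = (V₁, E₁)` be the edge intersection hypergraph of a
3-uniform hypergraph `H₁ = (V₁, ℰ₁)`, let `v₁ ∈ V₁`, let `u ∈ V₁` be a neighbor of `v₁`
in `G₁`, let `x ∈ V₁ \ {v₁, u}`, and let `v₂, v₃` be distinct new vertices not in `V₁`.
Then for the 3-uniform hypergraph
`H = (V₁ ∪ {v₂, v₃}, ℰ₁ ∪ {{v₁,v₂,v₃}, {u,v₁,v₂}, {u,v₁,v₃}, {x,v₂,v₃}})` one has
`EI(H) = G₁ ⊕ C₃`, i.e. the edge set of `EI(H)` equals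
`E₁ ∪ {{v₁,v₂}, {v₂,v₃}, {v₃,v₁}}`. -/
theorem EI_pendant_triangle {α : Type*} [DecidableEq α]
    (V₁ : Finset α) (E₁ ℰ₁ : Set (Finset α))
    (huniform : ∀ e ∈ ℰ₁, e.card = 3 ∧ e ⊆ V₁)
    (hEI : EIedges ℰ₁ = E₁)
    (v₁ u x : α) (hv₁ : v₁ ∈ V₁)
    (hu : ({u, v₁} : Finset α) ∈ E₁)
    (hx : x ∈ V₁) (hxv : x ≠ v₁) (hxu : x ≠ u)
    (v₂ v₃ : α) (hv₂ : v₂ ∉ V₁) (hv₃ : v₃ ∉ V₁) (hne : v₂ ≠ v₃) :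
    EIedges (ℰ₁ ∪ {({v₁, v₂, v₃} : Finset α), ({u, v₁, v₂} : Finset α),
        ({u, v₁, v₃} : Finset α), ({x, v₂, v₃} : Finset α)})
      = E₁ ∪ {({v₁, v₂} : Finset α), ({v₂, v₃} : Finset α), ({v₃, v₁} : Finset α)} := by
  have huv : u ≠ v₁ ∧ u ∈ V₁ := by
    rw [← hEI] at hu
    obtain ⟨e₁, he₁, e₂, -, -, hcard, heq⟩ := hu
    refine ⟨?_, (huniform e₁ he₁).2 (Finset.mem_inter.1 (heq ▸ Finset.mem_insert_self u _)).1⟩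
    rintro rfl
    rw [← heq] at hcard
    simp at hcard
  obtain ⟨huv, huV⟩ := huv
  have h12 : v₁ ≠ v₂ := by rintro rfl; exact hv₂ hv₁
  have h13 : v₁ ≠ v₃ := by rintro rfl; exact hv₃ hv₁
  have hu2 : u ≠ v₂ := by rintro rfl; exact hv₂ huV
  have hu3 : u ≠ v₃ := by rintro rfl; exact hv₃ huV
  have hx2 : x ≠ v₂ := by rintro rfl; exact hv₂ hx
  have hx3 : x ≠ v₃ := by rintro rfl; exact hv₃ hx
  have hAB : ({v₁, v₂, v₃} ∩ {u, v₁, v₂} : Finset α) = {v₁, v₂} := by grind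
  have hAC : ({v₁, v₂, v₃} ∩ {u, v₁, v₃} : Finset α) = {v₃, v₁} := by grind
  have hAD : ({v₁, v₂, v₃} ∩ {x, v₂, v₃} : Finset α) = {v₂, v₃} := by grind
  have hBC : ({u, v₁, v₂} ∩ {u, v₁, v₃} : Finset α) = {u, v₁} := by grind
  have hBD : ({u, v₁, v₂} ∩ {x, v₂, v₃} : Finset α) = {v₂} := by grind
  have hCD : ({u, v₁, v₃} ∩ {x, v₂, v₃} : Finset α) = {v₃} := by grind
  have hmix : ∀ e ∈ ℰ₁, ∀ f ∈ ({{v₁, v₂, v₃}, {u, v₁, v₂}, {u, v₁, v₃}, {x, v₂, v₃}} :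
      Set (Finset α)), 2 ≤ (e ∩ f).card → e ∩ f = {u, v₁} := by
    intro e he f hf hcard
    have hev := (huniform e he).2
    have h2 : v₂ ∉ e := fun h => hv₂ (hev h)
    have h3 : v₃ ∉ e := fun h => hv₃ (hev h)
    -- The intersection lies in `{u, v₁}` or in `{x}`, and the latter is too small.
    have hsub : e ∩ f ⊆ {u, v₁} ∨ e ∩ f ⊆ {x} := by
      rcases hf with rfl | rfl | rfl | rfl
      · left; grind
      · left; grind
      · left; grind
      · right; grind
    rcases hsub with hsub | hsub
    · exact Finset.eq_of_subset_of_card_le hsub (Finset.card_le_two.trans hcard)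
    · have := Finset.card_le_card hsub
      rw [Finset.card_singleton] at this
      omega
  ext s
  constructor
  · rintro ⟨e, he, f, hf, hef, hcard, rfl⟩
    rcases he with he | he <;> rcases hf with hf | hf
    · exact Or.inl (hEI ▸ ⟨e, he, f, hf, hef, hcard, rfl⟩)
    · rw [hmix e he f hf hcard]
      exact Or.inl hu
    · rw [Finset.inter_comm] at hcard ⊢
      rw [hmix f hf e he hcard]
      exact Or.inl hu
    · rcases he with rfl | rfl | rfl | rfl <;> rcases hf with rfl | rfl | rfl | rfl <;>
        first
        | exact absurd rfl hef
        | simp [hAB, hAC, hAD, hBC, hu]; done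
        | simp [hBD, hCD] at hcard; done
        | rw [Finset.inter_comm] at hcard ⊢
          first
          | rw [hAB]; simp
          | rw [hAC]; simp
          | rw [hAD]; simp
          | rw [hBC]; exact Or.inl hu
          | simp [hBD, hCD] at hcard
  · rintro (hs | rfl | rfl | rfl)
    · rw [← hEI] at hs
      obtain ⟨e, he, f, hf, h⟩ := hs
      exact ⟨e, Or.inl he, f, Or.inl hf, h⟩
    · refine ⟨{v₁, v₂, v₃}, by simp, {u, v₁, v₂}, by simp, ?_, ?_, hAB.symm⟩
      · intro h
        have : v₃ ∈ ({u, v₁, v₂} : Finset α) := h ▸ by simp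
        grind
      · rw [hAB, Finset.card_pair h12]
    · refine ⟨{v₁, v₂, v₃}, by simp, {x, v₂, v₃}, by simp, ?_, ?_, hAD.symm⟩
      · intro h
        have : v₁ ∈ ({x, v₂, v₃} : Finset α) := h ▸ by simp
        grind
      · rw [hAD, Finset.card_pair hne]
    · refine ⟨{v₁, v₂, v₃}, by simp, {u, v₁, v₃}, by simp, ?_, ?_, hAC.symm⟩
      · intro h
        have : v₂ ∈ ({u, v₁, v₃} : Finset α) := h ▸ by simp
        grind
      · rw [hAC, Finset.card_pair h13.symm]
end

section
/- Let G₁ = (V₁, E₁) be the edge intersection hypergraph of a 3-uniform hypergraph H₁ = (V₁, ℰ₁) with |V₁| ≥ 5, let v₁ ∈ V₁, let u ∈ V₁ be a neighbor of v₁ in G₁, let x, y, z ∈ V₁ be such that v₁, u, x, y, z are pairwise distinct, and let v₂, v₃, v₄ be distinct new vertices not in V₁. Then for the 3-uniform hypergraph H = (V₁ ∪ {v₂, v₃, v₄}, ℰ₁ ∪ {{v₁, v₂, v₃}, {v₁, v₂, v₄}, {u, v₁, v₄}, {x, v₂, v₃}, {y, v₃, v₄}, {z, v₃, v₄}}) one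 has EI(H) = G₁ ⊕ C₄, i.e. the edge set of EI(H) equals E₁ ∪ {{v₁, v₂}, {v₂, v₃}, {v₃, v₄}, {v₄, v₁}} (the graph G₁ with a 4-cycle v₁v₂v₃v₄ attached at v₁). -/
theorem not_two_le_card_inter {α : Type*} [DecidableEq α] {e : Finset α} {a b c : α}
    (hb : b ∉ e) (hc : c ∉ e) : ¬ 2 ≤ (e ∩ {a, b, c}).card := by
  have h : e ∩ {a, b, c} ⊆ {a} := by
    intro t ht
    grind
  have := Finset.card_le_card h
  simp only [Finset.card_singleton] at this
  omega

theorem inter_eq_pair {α : Type*} [DecidableEq α] {e : Finset α} {a b c : α}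
    (hc : c ∉ e) (h : 2 ≤ (e ∩ {a, b, c}).card) : e ∩ {a, b, c} = {a, b} := by
  have hsub : e ∩ {a, b, c} ⊆ {a, b} := by
    intro t ht
    grind
  exact Finset.eq_of_subset_of_card_le hsub (Finset.card_le_two.trans h)

theorem triple_inter_triple {α : Type*} [DecidableEq α] {a b c d : α} (h : c ≠ d) :
    ({c, a, b} : Finset α) ∩ {d, a, b} = {a, b} := by
  ext t
  simp only [Finset.mem_inter, Finset.mem_insert, Finset.mem_singleton]
  grind

theorem pair_mem_EIedges {α : Type*} [DecidableEq α] {ℰ : Set (Finset α)} {e f : Finset α}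
    {a b : α} (he : e ∈ ℰ) (hf : f ∈ ℰ) (hef : e ≠ f) (hab : a ≠ b) (h : e ∩ f = {a, b}) :
    {a, b} ∈ EIedges ℰ :=
  ⟨e, he, f, hf, hef, by rw [h, Finset.card_pair hab], h.symm⟩

/-- Let `G₁ = (V₁, E₁)` be the edge intersection hypergraph of a
3-uniform hypergraph `H₁ = (V₁, ℰ₁)` with `|V₁| ≥ 5`, let `v₁ ∈ V₁`, let `u ∈ V₁` be a
neighbor of `v₁` in `G₁`, let `x, y, z ∈ V₁` with `v₁, u, x, y, z` pairwise distinct, and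
let `v₂, v₃, v₄` be distinct new vertices not in `V₁`.  Then for the 3-uniform hypergraph
`H = (V₁ ∪ {v₂,v₃,v₄}, ℰ₁ ∪ {{v₁,v₂,v₃}, {v₁,v₂,v₄}, {u,v₁,v₄}, {x,v₂,v₃}, {y,v₃,v₄},
{z,v₃,v₄}})` one has `EI(H) = G₁ ⊕ C₄`, i.e. the edge set of `EI(H)` equals
`E₁ ∪ {{v₁,v₂}, {v₂,v₃}, {v₃,v₄}, {v₄,v₁}}`. -/
theorem EI_pendant_four_cycle {α : Type*} [DecidableEq α]
    (V₁ : Finset α) (E₁ ℰ₁ : Set (Finset α)) (hV₁ : 5 ≤ V₁.card)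
    (huniform : ∀ e ∈ ℰ₁, e.card = 3 ∧ e ⊆ V₁)
    (hEI : EIedges ℰ₁ = E₁)
    (v₁ u x y z : α) (hv₁ : v₁ ∈ V₁)
    (hu : ({u, v₁} : Finset α) ∈ E₁)
    (hx : x ∈ V₁) (hy : y ∈ V₁) (hz : z ∈ V₁)
    (hdist : ({v₁, u, x, y, z} : Finset α).card = 5)
    (v₂ v₃ v₄ : α) (hv₂ : v₂ ∉ V₁) (hv₃ : v₃ ∉ V₁) (hv₄ : v₄ ∉ V₁)
    (h23 : v₂ ≠ v₃) (h24 : v₂ ≠ v₄) (h34 : v₃ ≠ v₄) :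
    EIedges (ℰ₁ ∪ {({v₁, v₂, v₃} : Finset α), ({v₁, v₂, v₄} : Finset α),
        ({u, v₁, v₄} : Finset α), ({x, v₂, v₃} : Finset α),
        ({y, v₃, v₄} : Finset α), ({z, v₃, v₄} : Finset α)})
      = E₁ ∪ {({v₁, v₂} : Finset α), ({v₂, v₃} : Finset α),
          ({v₃, v₄} : Finset α), ({v₄, v₁} : Finset α)} := by
  have hC : ∀ t ∈ ({u, v₁} : Finset α), t ∈ V₁ := by
    rw [← hEI] at hu
    obtain ⟨e₁, he₁, e₂, -, -, -, h⟩ := hu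
    intro t ht
    rw [h] at ht
    exact (huniform e₁ he₁).2 (Finset.mem_inter.1 ht).1
  have huV : u ∈ V₁ := hC u (by simp)
  obtain ⟨h1u, h1x, h1y, h1z, hux, huy, huz, hxy, hxz, hyz⟩ :
      v₁ ≠ u ∧ v₁ ≠ x ∧ v₁ ≠ y ∧ v₁ ≠ z ∧ u ≠ x ∧ u ≠ y ∧ u ≠ z ∧ x ≠ y ∧ x ≠ z ∧ y ≠ z := by
    have hsum : ({v₁, u, x, y, z} : Multiset α).toFinset.card =
        ({v₁, u, x, y, z} : Multiset α).card := by
      simpa using hdist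
    have hnodup := Multiset.toFinset_card_eq_card_iff_nodup.1 hsum
    simp at hnodup
    tauto
  have hne : ∀ a ∈ V₁, ∀ b ∉ V₁, a ≠ b := fun a ha b hb h => hb (h ▸ ha)
  have h12 := hne _ hv₁ _ hv₂
  have h13 := hne _ hv₁ _ hv₃
  have h14 := hne _ hv₁ _ hv₄
  have hu2 := hne _ huV _ hv₂
  have hu3 := hne _ huV _ hv₃
  have hu4 := hne _ huV _ hv₄
  have hx2 := hne _ hx _ hv₂
  have hx3 := hne _ hx _ hv₃
  have hx4 := hne _ hx _ hv₄
  have hy2 := hne _ hy _ hv₂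
  have hy3 := hne _ hy _ hv₃
  have hy4 := hne _ hy _ hv₄
  have hz2 := hne _ hz _ hv₂
  have hz3 := hne _ hz _ hv₃
  have hz4 := hne _ hz _ hv₄
  have hmixed : ∀ e ∈ ℰ₁, ∀ f ∈ ({({v₁, v₂, v₃} : Finset α), ({v₁, v₂, v₄} : Finset α),
        ({u, v₁, v₄} : Finset α), ({x, v₂, v₃} : Finset α),
        ({y, v₃, v₄} : Finset α), ({z, v₃, v₄} : Finset α)} : Set (Finset α)),
      2 ≤ (e ∩ f).card → e ∩ f ∈ E₁ := by
    intro e he f hf hcard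
    have hsub := (huniform e he).2
    have h2 : v₂ ∉ e := fun h => hv₂ (hsub h)
    have h3 : v₃ ∉ e := fun h => hv₃ (hsub h)
    have h4 : v₄ ∉ e := fun h => hv₄ (hsub h)
    rcases hf with rfl | rfl | rfl | rfl | rfl | rfl
    · exact absurd hcard (not_two_le_card_inter h2 h3)
    · exact absurd hcard (not_two_le_card_inter h2 h4)
    · rw [inter_eq_pair h4 hcard]
      exact hu
    · exact absurd hcard (not_two_le_card_inter h2 h3)
    · exact absurd hcard (not_two_le_card_inter h3 h4)
    · exact absurd hcard (not_two_le_card_inter h3 h4)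
  have hrot : ∀ a, ({a, v₁, v₂} : Finset α) = {v₁, v₂, a} := by
    intro a
    rw [Finset.insert_comm, Finset.pair_comm]
  ext s
  constructor
  · rintro ⟨e, he, f, hf, hef, hcard, rfl⟩
    rcases he with he | he <;> rcases hf with hf | hf
    · left
      rw [← hEI]
      exact ⟨e, he, f, hf, hef, hcard, rfl⟩
    · exact Or.inl (hmixed e he f hf hcard)
    · rw [Finset.inter_comm] at hcard ⊢
      exact Or.inl (hmixed f hf e he hcard)
    · right
      -- All pairs of new hyperedges: equal, without two common elements, or with one of the four
      -- edges of the cycle as intersection. Only the inequalities between vertices matter here.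
      rcases he with rfl | rfl | rfl | rfl | rfl | rfl <;>
        rcases hf with rfl | rfl | rfl | rfl | rfl | rfl <;>
        first
        | exact absurd rfl hef
        | (exfalso
           obtain ⟨a, ha, b, hb, hab⟩ := Finset.one_lt_card.1 hcard
           clear hef hcard hmixed huniform hEI hdist hC hne hrot
           grind)
        | (clear hef hcard hmixed huniform hEI hdist hC hne hrot
           simp only [Set.mem_insert_iff, Set.mem_singleton_iff]
           first
           | (left; grind)
           | (right; left; grind)
           | (right; right; left; grind)
           | (right; right; right; grind))
  · rintro (hs | rfl | rfl | rfl | rfl)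
    · rw [← hEI] at hs
      obtain ⟨e, he, f, hf, h⟩ := hs
      exact ⟨e, Or.inl he, f, Or.inl hf, h⟩
    · have h := triple_inter_triple (a := v₁) (b := v₂) h34
      rw [hrot v₃, hrot v₄] at h
      exact pair_mem_EIedges (by simp) (by simp)
        (ne_of_mem_of_not_mem' (a := v₃) (by simp) (by simp [h13.symm, h23.symm, h34])) h12 h
    · exact pair_mem_EIedges (by simp) (by simp)
        (ne_of_mem_of_not_mem' (a := v₁) (by simp) (by simp [h1x, h12, h13])) h23
        (triple_inter_triple h1x)
    · exact pair_mem_EIedges (by simp) (by simp)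
        (ne_of_mem_of_not_mem' (a := y) (by simp) (by simp [hyz, hy3, hy4])) h34
        (triple_inter_triple hyz)
    · have h := triple_inter_triple (a := v₁) (b := v₄) hu2.symm
      rw [Finset.insert_comm v₂ v₁] at h
      exact pair_mem_EIedges (by simp) (by simp)
        (ne_of_mem_of_not_mem' (a := v₂) (by simp) (by simp [hu2.symm, h12.symm, h24])) h14.symm
        (h.trans (Finset.pair_comm _ _))
end
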